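/- arXiv:math/0701228 — 2 statements merged into one kernel-verified Lean document; each statement's English description precedes it below -/
import Mathlib

section
/- For every t > 0 and every K > 1, writing r' = 1/√(1+t), one has η_K(t) < (1/16)·exp(2K·μ(r')) − 1/2 + c₂(t,K)·exp(−2K·μ(r')), where c₂(t,K) = (1/16)·(1 + 4·(5·exp(−8K·μ(r')) + 14·exp(−4K·μ(r')) + 5)/(exp(−12K·μ(r')) + 7·exp(−8K·μ(r')) + 7·exp(−4K·μ(r')) + 1)); moreover c₂(t,K) < 21/16. -/
open Set Filter

/-- Complete elliptic integral of the first kind. -/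
noncomputable def ellK (r : ℝ) : ℝ :=
  ∫ θ in (0:ℝ)..(Real.pi / 2), (1 - r ^ 2 * Real.sin θ ^ 2) ^ (-(1/2) : ℝ)

/-- The Grötzsch modulus μ(r) = (π/2)·𝒦'(r)/𝒦(r). -/
noncomputable def mu (r : ℝ) : ℝ :=
  Real.pi / 2 * ellK (Real.sqrt (1 - r ^ 2)) / ellK r

/-!
Write `r' = √(1 - r²)` and `a(r) = √[4]{r'}`. The theorem is the estimate `artanh a(r) < μ(r)`
rewritten: it says `1 - r² = a(r)⁸ < tanh(μ(r))⁸`, an upper bound for `1 / r² - 1` which is rational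
in `q = exp(-2μ(r))`.

The descending Landen transformation `r ↦ d = (1 - r') / (1 + r')` doubles `μ`, while the
arithmetic-geometric inequality `(2a / (1 + a²))⁸ < a(d)⁸` shows that it more than doubles
`artanh ∘ a`. Hence it more than doubles the difference `artanh ∘ a - μ`. Since that difference is
bounded above, by the logarithmic behaviour of `μ` at `0`, it must be negative.
-/

section

open Real Topology

variable {r : ℝ}

/-! ### Complete elliptic integrals -/

lemma one_sub_sq_le_one_sub_sq_mul_sin_sq (r θ : ℝ) : 1 - r ^ 2 ≤ 1 - r ^ 2 * sin θ ^ 2 :=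
  sub_le_sub_left (mul_le_of_le_one_right (sq_nonneg r) (sin_sq_le_one θ)) 1

lemma one_sub_sq_mul_sin_sq_pos (hr : r ^ 2 < 1) (θ : ℝ) : 0 < 1 - r ^ 2 * sin θ ^ 2 :=
  (sub_pos.2 hr).trans_le (one_sub_sq_le_one_sub_sq_mul_sin_sq r θ)

lemma rpow_neg_half_eq_inv_sqrt {x : ℝ} (hx : 0 ≤ x) : x ^ (-(1 / 2) : ℝ) = (√x)⁻¹ := by
  rw [rpow_neg hx, sqrt_eq_rpow]

lemma ellK_eq_integral_inv_sqrt (hr : r ^ 2 < 1) :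
    ellK r = ∫ θ in (0 : ℝ)..(π / 2), (√(1 - r ^ 2 * sin θ ^ 2))⁻¹ :=
  intervalIntegral.integral_congr fun θ _ =>
    rpow_neg_half_eq_inv_sqrt (one_sub_sq_mul_sin_sq_pos hr θ).le

lemma continuous_inv_sqrt_one_sub_sq_mul_sin_sq (hr : r ^ 2 < 1) :
    Continuous fun θ : ℝ => (√(1 - r ^ 2 * sin θ ^ 2))⁻¹ :=
  Continuous.inv₀ (by fun_prop) fun θ => (sqrt_pos.2 (one_sub_sq_mul_sin_sq_pos hr θ)).ne'

lemma ellK_pos (hr : r ^ 2 < 1) : 0 < ellK r := by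
  rw [ellK_eq_integral_inv_sqrt hr]
  exact intervalIntegral.intervalIntegral_pos_of_pos
    ((continuous_inv_sqrt_one_sub_sq_mul_sin_sq hr).intervalIntegrable _ _)
    (fun θ => inv_pos.2 (sqrt_pos.2 (one_sub_sq_mul_sin_sq_pos hr θ))) pi_div_two_pos

lemma ellK_le_pi_div_two_mul_inv_sqrt (hr : r ^ 2 < 1) : ellK r ≤ π / 2 * (√(1 - r ^ 2))⁻¹ := by
  calc ellK r = ∫ θ in (0 : ℝ)..(π / 2), (√(1 - r ^ 2 * sin θ ^ 2))⁻¹ :=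
        ellK_eq_integral_inv_sqrt hr
    _ ≤ ∫ _ in (0 : ℝ)..(π / 2), (√(1 - r ^ 2))⁻¹ := by
        refine intervalIntegral.integral_mono_on pi_div_two_pos.le
          ((continuous_inv_sqrt_one_sub_sq_mul_sin_sq hr).intervalIntegrable _ _)
          intervalIntegrable_const fun θ _ => ?_
        exact inv_anti₀ (sqrt_pos.2 (sub_pos.2 hr))
          (sqrt_le_sqrt (one_sub_sq_le_one_sub_sq_mul_sin_sq r θ))
    _ = π / 2 * (√(1 - r ^ 2))⁻¹ := by simp

lemma continuousAt_ellK (hr : r ^ 2 < 1) : ContinuousAt ellK r := by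
  obtain ⟨c, hrc, hc⟩ := exists_between hr
  have near : ∀ᶠ x : ℝ in 𝓝 r, x ^ 2 < c := (continuous_pow 2).continuousAt.eventually_lt_const hrc
  refine intervalIntegral.continuousAt_of_dominated_interval
    (bound := fun _ => (1 - c) ^ (-(1 / 2) : ℝ)) (.of_forall fun x => ?_)
    (near.mono fun x hx => .of_forall fun θ _ => ?_) intervalIntegrable_const
    (.of_forall fun θ _ => ?_)
  · have : Measurable fun θ => (1 - x ^ 2 * sin θ ^ 2) ^ (-(1 / 2) : ℝ) := by fun_prop
    exact this.aestronglyMeasurable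
  · have base_ge : 1 - c ≤ 1 - x ^ 2 * sin θ ^ 2 :=
      (by linarith : 1 - c ≤ 1 - x ^ 2).trans (one_sub_sq_le_one_sub_sq_mul_sin_sq x θ)
    rw [norm_of_nonneg (rpow_nonneg (by linarith) _)]
    exact rpow_le_rpow_of_nonpos (by linarith) base_ge (by norm_num)
  · exact ContinuousAt.rpow_const (by fun_prop) (.inl (one_sub_sq_mul_sin_sq_pos hr θ).ne')

/-! ### Landen's transformation -/

/-- The sine of the amplitude substituted for `φ` in Landen's transformation of `ellK`. -/
noncomputable def landenSine (r φ : ℝ) : ℝ := (1 + r) * sin φ / (1 + r * sin φ ^ 2)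

/-- The amplitude substituted for `φ` in Landen's transformation of `ellK`. -/
noncomputable def landenAmplitude (r φ : ℝ) : ℝ := arcsin (landenSine r φ)

/-- The derivative of `landenAmplitude r` where `0 < cos φ`. -/
noncomputable def landenAmplitudeDeriv (r φ : ℝ) : ℝ :=
  (1 + r) * (1 - r * sin φ ^ 2) / ((1 + r * sin φ ^ 2) * √(1 - r ^ 2 * sin φ ^ 2))

lemma sq_lt_one_of_mem_Ico (hr : r ∈ Ico 0 1) : r ^ 2 < 1 :=
  pow_lt_one₀ hr.1 hr.2 two_ne_zero

lemma one_add_mul_sin_sq_pos (hr : 0 ≤ r) (φ : ℝ) : 0 < 1 + r * sin φ ^ 2 := by positivity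

lemma one_sub_mul_sin_sq_pos (hr : r ∈ Ico 0 1) (φ : ℝ) : 0 < 1 - r * sin φ ^ 2 := by
  nlinarith [hr.1, hr.2, sin_sq_le_one φ]

lemma landenSine_mem_Icc (hr : r ∈ Icc 0 1) (φ : ℝ) : landenSine r φ ∈ Icc (-1) 1 := by
  have hden := one_add_mul_sin_sq_pos hr.1 φ
  have sin_le := sin_le_one φ
  have le_sin := neg_one_le_sin φ
  constructor
  · have : 0 ≤ (1 + sin φ) * (1 + r * sin φ) :=
      mul_nonneg (by linarith) (by nlinarith [hr.1, hr.2])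
    rw [landenSine, le_div_iff₀ hden]
    linarith
  · have : 0 ≤ (1 - sin φ) * (1 - r * sin φ) :=
      mul_nonneg (by linarith) (by nlinarith [hr.1, hr.2])
    rw [landenSine, div_le_one hden]
    linarith

lemma sin_landenAmplitude (hr : r ∈ Icc 0 1) (φ : ℝ) : sin (landenAmplitude r φ) = landenSine r φ :=
  sin_arcsin' (landenSine_mem_Icc hr φ)

lemma hasDerivAt_landenSine (hr : 0 ≤ r) (φ : ℝ) :
    HasDerivAt (landenSine r)
      ((1 + r) * cos φ * (1 - r * sin φ ^ 2) / (1 + r * sin φ ^ 2) ^ 2) φ := by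
  have hnum : HasDerivAt (fun φ => (1 + r) * sin φ) ((1 + r) * cos φ) φ :=
    (hasDerivAt_sin φ).const_mul _
  have hden : HasDerivAt (fun φ => 1 + r * sin φ ^ 2) (r * (2 * sin φ * cos φ)) φ := by
    simpa using (((hasDerivAt_sin φ).fun_pow 2).const_mul r).const_add 1
  refine (hnum.fun_div hden (one_add_mul_sin_sq_pos hr φ).ne').congr_deriv ?_
  congr 1
  ring

lemma one_sub_sq_landenSine (hr : r ∈ Ico 0 1) (φ : ℝ) :
    1 - landenSine r φ ^ 2 =
      (cos φ * √(1 - r ^ 2 * sin φ ^ 2) / (1 + r * sin φ ^ 2)) ^ 2 := by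
  have hden := (one_add_mul_sin_sq_pos hr.1 φ).ne'
  have hrad := one_sub_sq_mul_sin_sq_pos (sq_lt_one_of_mem_Ico hr) φ
  rw [landenSine, div_pow _ _ 2, div_pow _ _ 2, mul_pow (cos φ), sq_sqrt hrad.le, cos_sq']
  field_simp
  ring

lemma continuous_landenAmplitude (hr : 0 ≤ r) : Continuous (landenAmplitude r) :=
  continuous_arcsin.comp <|
    continuous_iff_continuousAt.2 fun φ => (hasDerivAt_landenSine hr φ).continuousAt

lemma landenAmplitude_zero (r : ℝ) : landenAmplitude r 0 = 0 := by
  simp [landenAmplitude, landenSine]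

lemma landenAmplitude_pi_div_two (hr : 0 ≤ r) : landenAmplitude r (π / 2) = π / 2 := by
  simp [landenAmplitude, landenSine, (by positivity : 1 + r ≠ 0)]

lemma landenAmplitudeDeriv_nonneg (hr : r ∈ Ico 0 1) (φ : ℝ) : 0 ≤ landenAmplitudeDeriv r φ := by
  have := hr.1
  have := one_sub_mul_sin_sq_pos hr φ
  unfold landenAmplitudeDeriv
  positivity

lemma hasDerivAt_landenAmplitude (hr : r ∈ Ico 0 1) {φ : ℝ} (hφ : 0 < cos φ) :
    HasDerivAt (landenAmplitude r) (landenAmplitudeDeriv r φ) φ := by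
  have hden := one_add_mul_sin_sq_pos hr.1 φ
  have hroot : 0 < √(1 - r ^ 2 * sin φ ^ 2) :=
    sqrt_pos.2 (one_sub_sq_mul_sin_sq_pos (sq_lt_one_of_mem_Ico hr) φ)
  have hcos : 0 < cos φ * √(1 - r ^ 2 * sin φ ^ 2) / (1 + r * sin φ ^ 2) := by positivity
  have hsq := one_sub_sq_landenSine hr φ
  obtain ⟨hgt, hlt⟩ : landenSine r φ ∈ Ioo (-1) 1 :=
    abs_lt.1 ((sq_lt_one_iff_abs_lt_one _).1 (sub_pos.1 (hsq ▸ pow_pos hcos 2)))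
  refine ((hasDerivAt_arcsin hgt.ne' hlt.ne).comp φ (hasDerivAt_landenSine hr.1 φ)).congr_deriv ?_
  rw [hsq, sqrt_sq hcos.le, landenAmplitudeDeriv]
  field_simp

lemma inv_sqrt_landenAmplitude_mul_deriv {k : ℝ} (hr : r ∈ Ico 0 1)
    (hk : k ^ 2 = 4 * r / (1 + r) ^ 2) (φ : ℝ) :
    (√(1 - k ^ 2 * sin (landenAmplitude r φ) ^ 2))⁻¹ * landenAmplitudeDeriv r φ =
      (1 + r) * (√(1 - r ^ 2 * sin φ ^ 2))⁻¹ := by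
  have := hr.1
  have := one_add_mul_sin_sq_pos hr.1 φ
  have := one_sub_mul_sin_sq_pos hr φ
  have hsq : 1 - k ^ 2 * sin (landenAmplitude r φ) ^ 2 =
      ((1 - r * sin φ ^ 2) / (1 + r * sin φ ^ 2)) ^ 2 := by
    rw [sin_landenAmplitude (Ico_subset_Icc_self hr), landenSine, hk]
    field_simp
    ring
  rw [hsq, sqrt_sq (by positivity), landenAmplitudeDeriv]
  field_simp

theorem ellK_landen {k : ℝ} (hr : r ∈ Ico 0 1) (hk : k ^ 2 = 4 * r / (1 + r) ^ 2) :
    ellK k = (1 + r) * ellK r := by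
  have hk1 : k ^ 2 < 1 := by
    have := hr.1
    rw [hk, div_lt_one (by positivity)]
    linarith [sq_pos_of_pos (sub_pos.2 hr.2)]
  have hsubst := intervalIntegral.integral_comp_mul_deriv_of_deriv_nonneg
    (g := fun θ => (√(1 - k ^ 2 * sin θ ^ 2))⁻¹) (a := 0) (b := π / 2)
    (continuous_landenAmplitude hr.1).continuousOn
    (fun φ hφ => hasDerivAt_landenAmplitude hr <| by
      rw [min_eq_left pi_div_two_pos.le, max_eq_right pi_div_two_pos.le] at hφ
      exact cos_pos_of_mem_Ioo ⟨by linarith [hφ.1, pi_pos], hφ.2⟩)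
    (fun φ _ => landenAmplitudeDeriv_nonneg hr φ)
  rw [landenAmplitude_zero, landenAmplitude_pi_div_two hr.1] at hsubst
  rw [ellK_eq_integral_inv_sqrt hk1, ← hsubst, ellK_eq_integral_inv_sqrt (sq_lt_one_of_mem_Ico hr),
    ← intervalIntegral.integral_const_mul]
  exact intervalIntegral.integral_congr fun φ _ => inv_sqrt_landenAmplitude_mul_deriv hr hk φ

/-! ### The Grötzsch modulus -/

/-- The complementary modulus `r' = √(1 - r²)`. -/
noncomputable def complModulus (r : ℝ) : ℝ := √(1 - r ^ 2)

/-- The descending Landen transform `(1 - r') / (1 + r')` of a modulus `r`. -/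
noncomputable def landenDescent (r : ℝ) : ℝ := (1 - complModulus r) / (1 + complModulus r)

lemma sq_lt_one_of_mem_Ioo (hr : r ∈ Ioo 0 1) : r ^ 2 < 1 :=
  sq_lt_one_of_mem_Ico (Ioo_subset_Ico_self hr)

lemma sq_complModulus (hr : r ∈ Ioo 0 1) : complModulus r ^ 2 = 1 - r ^ 2 :=
  sq_sqrt (sub_nonneg.2 (sq_lt_one_of_mem_Ioo hr).le)

lemma complModulus_mem_Ioo (hr : r ∈ Ioo 0 1) : complModulus r ∈ Ioo 0 1 :=
  ⟨sqrt_pos.2 (sub_pos.2 (sq_lt_one_of_mem_Ioo hr)),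
    (sqrt_lt' one_pos).2 (by linarith [pow_pos hr.1 2])⟩

lemma complModulus_complModulus (hr : r ∈ Ioo 0 1) : complModulus (complModulus r) = r := by
  rw [complModulus, sq_complModulus hr, sub_sub_cancel, sqrt_sq hr.1.le]

lemma continuous_complModulus : Continuous complModulus := by
  unfold complModulus
  fun_prop

lemma landenDescent_mem_Ioo (hr : r ∈ Ioo 0 1) : landenDescent r ∈ Ioo 0 1 := by
  obtain ⟨hpos, hlt⟩ := complModulus_mem_Ioo hr
  refine ⟨div_pos (by linarith) (by linarith), ?_⟩
  rw [landenDescent, div_lt_one (by linarith)]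
  linarith

lemma one_sub_sq_landenDescent (hr : r ∈ Ioo 0 1) :
    1 - landenDescent r ^ 2 = 4 * complModulus r / (1 + complModulus r) ^ 2 := by
  have := (complModulus_mem_Ioo hr).1
  unfold landenDescent
  field_simp
  ring

lemma sq_eq_four_mul_landenDescent (hr : r ∈ Ioo 0 1) :
    r ^ 2 = 4 * landenDescent r / (1 + landenDescent r) ^ 2 := by
  have := (complModulus_mem_Ioo hr).1
  rw [← sub_sub_cancel 1 (r ^ 2), ← sq_complModulus hr]
  unfold landenDescent
  field_simp
  ring

lemma mu_pos (hr : r ∈ Ioo 0 1) : 0 < mu r := by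
  have hK := ellK_pos (sq_lt_one_of_mem_Ioo hr)
  have hK' : 0 < ellK (√(1 - r ^ 2)) := ellK_pos (sq_lt_one_of_mem_Ioo (complModulus_mem_Ioo hr))
  unfold mu
  positivity

lemma mu_complModulus (hr : r ∈ Ioo 0 1) : mu (complModulus r) = (π / 2) ^ 2 / mu r := by
  have hK := ellK_pos (sq_lt_one_of_mem_Ioo hr)
  have hK' := ellK_pos (sq_lt_one_of_mem_Ioo (complModulus_mem_Ioo hr))
  change π / 2 * ellK (complModulus (complModulus r)) / ellK (complModulus r) =
    (π / 2) ^ 2 / (π / 2 * ellK (complModulus r) / ellK r)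
  rw [complModulus_complModulus hr]
  field_simp

theorem mu_landenDescent (hr : r ∈ Ioo 0 1) : mu (landenDescent r) = 2 * mu r := by
  have hd := landenDescent_mem_Ioo hr
  have hr' := complModulus_mem_Ioo hr
  have hK : ellK r = (1 + landenDescent r) * ellK (landenDescent r) :=
    ellK_landen (Ioo_subset_Ico_self hd) (sq_eq_four_mul_landenDescent hr)
  have hK' : ellK (complModulus (landenDescent r)) =
      (1 + complModulus r) * ellK (complModulus r) :=
    ellK_landen (Ioo_subset_Ico_self hr')
      ((sq_complModulus hd).trans (one_sub_sq_landenDescent hr))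
  have factors : (1 + complModulus r) * (1 + landenDescent r) = 2 := by
    have := hr'.1
    unfold landenDescent
    field_simp
    ring
  have := ellK_pos (sq_lt_one_of_mem_Ioo hd)
  have := hd.1
  change π / 2 * ellK (complModulus (landenDescent r)) / ellK (landenDescent r) =
    2 * (π / 2 * ellK (complModulus r) / ellK r)
  rw [hK, hK']
  field_simp
  linear_combination ellK (complModulus r) * factors

/-! ### Boundary behaviour and surjectivity of `μ` -/

lemma sqrt_one_sub_complModulus_sq_mul_sin_sq_le (hr : r ∈ Ioo 0 1) {θ : ℝ}
    (hθ : θ ∈ Icc 0 (π / 2)) :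
    √(1 - complModulus r ^ 2 * sin θ ^ 2) ≤ π / 2 + r - θ := by
  have hcos0 : 0 ≤ cos θ := cos_nonneg_of_mem_Icc ⟨by linarith [hθ.1, pi_pos], hθ.2⟩
  have hcos : cos θ ≤ π / 2 - θ := by
    rw [← sin_pi_div_two_sub]
    exact sin_le (by linarith [hθ.2])
  have hsq : 1 - complModulus r ^ 2 * sin θ ^ 2 ≤ (cos θ + r) ^ 2 := by
    rw [sq_complModulus hr, sin_sq]
    nlinarith [mul_nonneg hcos0 hr.1.le, mul_nonneg (sq_nonneg r) (sq_nonneg (cos θ))]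
  calc √(1 - complModulus r ^ 2 * sin θ ^ 2) ≤ cos θ + r :=
        sqrt_le_iff.2 ⟨add_nonneg hcos0 hr.1.le, hsq⟩
    _ ≤ π / 2 + r - θ := by linarith

lemma neg_log_le_ellK_complModulus (hr : r ∈ Ioo 0 1) : -log r ≤ ellK (complModulus r) := by
  obtain ⟨hr0, hr1⟩ := hr
  have hr' := sq_lt_one_of_mem_Ioo (complModulus_mem_Ioo ⟨hr0, hr1⟩)
  have hint : IntervalIntegrable (fun θ => (π / 2 + r - θ)⁻¹) MeasureTheory.volume 0 (π / 2) := by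
    refine ContinuousOn.intervalIntegrable (ContinuousOn.inv₀ (by fun_prop) fun θ hθ => ?_)
    rw [uIcc_of_le pi_div_two_pos.le] at hθ
    linarith [hθ.2]
  calc -log r = log (1 / r) := by rw [one_div, log_inv]
    _ ≤ log ((π / 2 + r) / r) := by
        gcongr
        linarith [pi_gt_three]
    _ = ∫ θ in (0 : ℝ)..(π / 2), (π / 2 + r - θ)⁻¹ := by
        rw [intervalIntegral.integral_comp_sub_left (fun x => x⁻¹), add_sub_cancel_left, sub_zero,
          integral_inv_of_pos hr0 (by positivity)]
    _ ≤ ∫ θ in (0 : ℝ)..(π / 2), (√(1 - complModulus r ^ 2 * sin θ ^ 2))⁻¹ :=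
        intervalIntegral.integral_mono_on pi_div_two_pos.le hint
          ((continuous_inv_sqrt_one_sub_sq_mul_sin_sq hr').intervalIntegrable _ _) fun θ hθ =>
          inv_anti₀ (sqrt_pos.2 (one_sub_sq_mul_sin_sq_pos hr' θ))
            (sqrt_one_sub_complModulus_sq_mul_sin_sq_le ⟨hr0, hr1⟩ hθ)
    _ = ellK (complModulus r) := (ellK_eq_integral_inv_sqrt hr').symm

lemma complModulus_mul_neg_log_le_mu (hr : r ∈ Ioo 0 1) : complModulus r * -log r ≤ mu r := by
  have hr' := (complModulus_mem_Ioo hr).1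
  have hlog : 0 ≤ -log r := neg_nonneg.2 (log_nonpos hr.1.le hr.2.le)
  have hK : ellK r * complModulus r ≤ π / 2 :=
    (le_mul_inv_iff₀ hr').1 (ellK_le_pi_div_two_mul_inv_sqrt (sq_lt_one_of_mem_Ioo hr))
  refine (le_div_iff₀ (ellK_pos (sq_lt_one_of_mem_Ioo hr))).2 ?_
  calc complModulus r * -log r * ellK r = ellK r * complModulus r * -log r := by ring
    _ ≤ π / 2 * ellK (complModulus r) := by
        gcongr
        exact neg_log_le_ellK_complModulus hr

lemma neg_log_sub_one_le_mu (hr : r ∈ Ioo 0 1) : -log r - 1 ≤ mu r := by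
  have hlog : 0 ≤ -log r := neg_nonneg.2 (log_nonpos hr.1.le hr.2.le)
  have hr' : 1 - r ^ 2 ≤ complModulus r := by
    rw [← sq_complModulus hr]
    exact pow_le_of_le_one (sqrt_nonneg _) (complModulus_mem_Ioo hr).2.le two_ne_zero
  have hsmall : r ^ 2 * -log r ≤ 1 := by
    calc r ^ 2 * -log r ≤ r ^ 2 * r⁻¹ := by
          gcongr
          rw [← log_inv]
          exact log_le_self (inv_nonneg.2 hr.1.le)
      _ = r := by rw [sq, mul_inv_cancel_right₀ hr.1.ne']
      _ ≤ 1 := hr.2.le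
  calc -log r - 1 ≤ (1 - r ^ 2) * -log r := by linarith
    _ ≤ complModulus r * -log r := by gcongr
    _ ≤ mu r := complModulus_mul_neg_log_le_mu hr

lemma tendsto_mu_nhdsGT_zero : Tendsto mu (𝓝[>] 0) atTop := by
  have hlog : Tendsto (fun r => -log r - 1) (𝓝[>] 0) atTop :=
    tendsto_atTop_add_const_right _ _ (tendsto_neg_atBot_atTop.comp tendsto_log_nhdsGT_zero)
  refine tendsto_atTop_mono' _ ?_ hlog
  filter_upwards [Ioo_mem_nhdsGT one_pos] with r hr using neg_log_sub_one_le_mu hr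

lemma tendsto_complModulus_nhdsLT_one : Tendsto complModulus (𝓝[<] 1) (𝓝[>] 0) := by
  refine tendsto_nhdsWithin_iff.2 ⟨?_, ?_⟩
  · simpa [complModulus] using (continuous_complModulus.tendsto 1).mono_left nhdsWithin_le_nhds
  · filter_upwards [Ioo_mem_nhdsLT one_pos] with r hr using (complModulus_mem_Ioo hr).1

lemma tendsto_mu_nhdsLT_one : Tendsto mu (𝓝[<] 1) (𝓝 0) := by
  have hlim : Tendsto (fun r => (π / 2) ^ 2 / mu (complModulus r)) (𝓝[<] 1) (𝓝 0) :=
    (tendsto_mu_nhdsGT_zero.comp tendsto_complModulus_nhdsLT_one).const_div_atTop _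
  refine hlim.congr' ?_
  filter_upwards [Ioo_mem_nhdsLT one_pos] with r hr
  rw [← mu_complModulus (complModulus_mem_Ioo hr), complModulus_complModulus hr]

lemma continuousOn_mu : ContinuousOn mu (Ioo 0 1) := fun r hr => by
  have hK := continuousAt_ellK (sq_lt_one_of_mem_Ioo hr)
  have hK' : ContinuousAt (fun x => ellK (complModulus x)) r :=
    (continuousAt_ellK (sq_lt_one_of_mem_Ioo (complModulus_mem_Ioo hr))).comp
      continuous_complModulus.continuousAt
  exact ((hK'.const_mul (π / 2)).div hK (ellK_pos (sq_lt_one_of_mem_Ioo hr)).ne').continuousWithinAt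

theorem surjOn_mu : SurjOn mu (Ioo 0 1) (Ioi 0) :=
  isPreconnected_Ioo.intermediate_value_Ioi (le_principal_iff.2 (Ioo_mem_nhdsLT one_pos))
    (le_principal_iff.2 (Ioo_mem_nhdsGT one_pos)) continuousOn_mu tendsto_mu_nhdsLT_one
    tendsto_mu_nhdsGT_zero

/-! ### The lower bound `artanh (√[4]{r'}) < μ(r)` -/

lemma neg_of_bddAbove_of_mul_lt {α : Type*} {s : Set α} {T : α → α} {f : α → ℝ} {c : ℝ}
    (hc : 1 < c) (hT : MapsTo T s s) (hf : BddAbove (f '' s)) (hmul : ∀ x ∈ s, c * f x < f (T x))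
    {x : α} (hx : x ∈ s) : f x < 0 := by
  have hc0 : 0 < c := one_pos.trans hc
  have le_sup : ∀ y ∈ s, f y ≤ sSup (f '' s) := fun y hy => le_csSup hf (mem_image_of_mem f hy)
  have sup_le : sSup (f '' s) ≤ sSup (f '' s) / c := by
    refine csSup_le ⟨f x, mem_image_of_mem f hx⟩ (forall_mem_image.2 fun y hy => ?_)
    rw [le_div_iff₀' hc0]
    exact (hmul y hy).le.trans (le_sup _ (hT hy))
  have sup_nonpos : sSup (f '' s) ≤ 0 := by
    rw [le_div_iff₀ hc0] at sup_le
    nlinarith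
  have hfx : c * f x < 0 := (hmul x hx).trans_le ((le_sup _ (hT hx)).trans sup_nonpos)
  exact neg_of_mul_neg_right hfx hc0.le

lemma two_mul_artanh {x : ℝ} (hx : x ∈ Ioo (-1) 1) :
    2 * artanh x = artanh (2 * x / (1 + x ^ 2)) := by
  have hplus : 0 < 1 + x := by linarith [hx.1]
  have hminus : 0 < 1 - x := by linarith [hx.2]
  have hratio : (1 + 2 * x / (1 + x ^ 2)) / (1 - 2 * x / (1 + x ^ 2)) =
      ((1 + x) / (1 - x)) ^ 2 := by
    have : 0 < 1 + x ^ 2 - 2 * x := by nlinarith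
    field_simp
    ring
  have hroot : √((1 + x) / (1 - x)) ^ 2 = (1 + x) / (1 - x) := sq_sqrt (by positivity)
  rw [artanh, artanh, hratio, sqrt_sq (by positivity), ← hroot, log_pow, hroot, Nat.cast_ofNat]

/-- The fourth root `√[4]{r'}` of the complementary modulus. -/
noncomputable def fourthRootCompl (r : ℝ) : ℝ := √√(complModulus r)

lemma fourthRootCompl_pow_four (r : ℝ) : fourthRootCompl r ^ 4 = complModulus r := by
  rw [fourthRootCompl, pow_mul _ 2 2, sq_sqrt (sqrt_nonneg _)]
  exact sq_sqrt (sqrt_nonneg _)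

lemma fourthRootCompl_pow_eight (hr : r ∈ Ioo 0 1) : fourthRootCompl r ^ 8 = 1 - r ^ 2 := by
  rw [pow_mul _ 4 2, fourthRootCompl_pow_four, sq_complModulus hr]

lemma fourthRootCompl_mem_Ioo (hr : r ∈ Ioo 0 1) : fourthRootCompl r ∈ Ioo 0 1 := by
  obtain ⟨hpos, hlt⟩ := complModulus_mem_Ioo hr
  refine ⟨sqrt_pos.2 (sqrt_pos.2 hpos), lt_of_pow_lt_pow_left₀ 4 zero_le_one ?_⟩
  rwa [fourthRootCompl_pow_four, one_pow]

lemma two_mul_div_one_add_sq_pow_eight_lt {a : ℝ} (ha : a ∈ Ioo 0 1) :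
    (2 * a / (1 + a ^ 2)) ^ 8 < 4 * a ^ 4 / (1 + a ^ 4) ^ 2 := by
  have ha0 := ha.1
  have hlt : 8 * a ^ 2 * (1 + a ^ 4) < (1 + a ^ 2) ^ 4 := by
    have hpos : 0 < (1 - a ^ 2) ^ 4 := pow_pos (by nlinarith [ha.2]) 4
    linear_combination hpos
  calc (2 * a / (1 + a ^ 2)) ^ 8
      = 4 * a ^ 4 * (8 * a ^ 2) ^ 2 / ((1 + a ^ 2) ^ 4) ^ 2 := by
        rw [div_pow, ← pow_mul]
        ring
    _ < 4 * a ^ 4 / (1 + a ^ 4) ^ 2 := by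
        rw [div_lt_div_iff₀ (by positivity) (by positivity), mul_assoc, ← mul_pow]
        gcongr

lemma two_mul_artanh_fourthRootCompl_lt (hr : r ∈ Ioo 0 1) :
    2 * artanh (fourthRootCompl r) < artanh (fourthRootCompl (landenDescent r)) := by
  have ha := fourthRootCompl_mem_Ioo hr
  have hd := landenDescent_mem_Ioo hr
  obtain ⟨hb0, hb1⟩ := fourthRootCompl_mem_Ioo hd
  have hlt : 2 * fourthRootCompl r / (1 + fourthRootCompl r ^ 2) <
      fourthRootCompl (landenDescent r) := by
    refine lt_of_pow_lt_pow_left₀ 8 hb0.le ?_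
    rw [fourthRootCompl_pow_eight hd, one_sub_sq_landenDescent hr, ← fourthRootCompl_pow_four]
    exact two_mul_div_one_add_sq_pow_eight_lt ha
  have hpos : 0 < 2 * fourthRootCompl r / (1 + fourthRootCompl r ^ 2) := by
    have := ha.1
    positivity
  rw [two_mul_artanh ⟨by linarith [ha.1], ha.2⟩]
  exact artanh_lt_artanh (by linarith) hb1 hlt

lemma artanh_fourthRootCompl_le (hr : r ∈ Ioo 0 1) :
    artanh (fourthRootCompl r) ≤ log 4 - log r := by
  have hr0 := hr.1
  have hsq := fourthRootCompl_pow_eight hr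
  obtain ⟨ha0, ha1⟩ := fourthRootCompl_mem_Ioo hr
  set a := fourthRootCompl r
  have hfactor : (1 + a) * ((1 + a) * (1 + a ^ 2) * (1 + a ^ 4)) ≤ 2 * (2 * 2 * 2) := by
    have : a ^ 2 ≤ 1 := pow_le_one₀ ha0.le ha1.le
    have : a ^ 4 ≤ 1 := pow_le_one₀ ha0.le ha1.le
    gcongr <;> linarith
  have hratio : (1 + a) / (1 - a) ≤ (4 / r) ^ 2 := by
    rw [div_pow, div_le_div_iff₀ (by linarith) (by positivity)]
    calc (1 + a) * r ^ 2 = (1 + a) * ((1 + a) * (1 + a ^ 2) * (1 + a ^ 4)) * (1 - a) := by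
          linear_combination (1 + a) * hsq
      _ ≤ 2 * (2 * 2 * 2) * (1 - a) := mul_le_mul_of_nonneg_right hfactor (by linarith)
      _ = 4 ^ 2 * (1 - a) := by ring
  rw [← log_div (by norm_num) hr0.ne', artanh]
  have hpos : 0 < (1 + a) / (1 - a) := div_pos (by linarith) (by linarith)
  exact log_le_log (sqrt_pos.2 hpos) (sqrt_le_iff.2 ⟨by positivity, hratio⟩)

theorem artanh_fourthRootCompl_lt_mu (hr : r ∈ Ioo 0 1) : artanh (fourthRootCompl r) < mu r := by
  have hbdd : BddAbove ((fun x => artanh (fourthRootCompl x) - mu x) '' Ioo 0 1) := by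
    refine ⟨log 4 + 1, forall_mem_image.2 fun x hx => ?_⟩
    linarith [artanh_fourthRootCompl_le hx, neg_log_sub_one_le_mu hx]
  refine sub_neg.1 (neg_of_bddAbove_of_mul_lt one_lt_two (fun x => landenDescent_mem_Ioo) hbdd
    (fun x hx => ?_) hr)
  linarith [two_mul_artanh_fourthRootCompl_lt hx, mu_landenDescent hx]

lemma one_sub_sq_lt_tanh_mu_pow_eight (hr : r ∈ Ioo 0 1) : 1 - r ^ 2 < tanh (mu r) ^ 8 := by
  obtain ⟨ha0, ha1⟩ := fourthRootCompl_mem_Ioo hr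
  have hlt : fourthRootCompl r < tanh (mu r) := by
    rw [← artanh_lt_artanh_iff ⟨by linarith, ha1⟩ ⟨neg_one_lt_tanh _, tanh_lt_one _⟩, artanh_tanh]
    exact artanh_fourthRootCompl_lt_mu hr
  rw [← fourthRootCompl_pow_eight hr]
  exact pow_lt_pow_left₀ hlt ha0.le (by norm_num)

/-! ### The bound in terms of `exp (-2μ)` -/

/-- The coefficient `c₂(t, K)` as a function of `q = exp (-2Kμ(r'))`. -/
noncomputable def etaCoeff (q : ℝ) : ℝ :=
  1 / 16 * (1 + 4 * (5 * q ^ 4 + 14 * q ^ 2 + 5) / (q ^ 6 + 7 * q ^ 4 + 7 * q ^ 2 + 1))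

lemma etaCoeff_lt {q : ℝ} (hq : q ≠ 0) : etaCoeff q < 21 / 16 := by
  have hfrac : 4 * (5 * q ^ 4 + 14 * q ^ 2 + 5) / (q ^ 6 + 7 * q ^ 4 + 7 * q ^ 2 + 1) < 20 := by
    have : 0 < q ^ 2 := by positivity
    rw [div_lt_iff₀ (by positivity)]
    nlinarith [pow_pos this 2, pow_pos this 3]
  unfold etaCoeff
  linarith

lemma etaCoeff_exp (K m : ℝ) :
    etaCoeff (exp (-(2 * K * m))) =
      1 / 16 * (1 + 4 * (5 * exp (-(8 * K * m)) + 14 * exp (-(4 * K * m)) + 5) /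
        (exp (-(12 * K * m)) + 7 * exp (-(8 * K * m)) + 7 * exp (-(4 * K * m)) + 1)) := by
  simp only [etaCoeff, ← exp_nat_mul]
  ring_nf

lemma tanh_eq_one_sub_exp_div (x : ℝ) :
    tanh x = (1 - exp (-(2 * x))) / (1 + exp (-(2 * x))) := by
  have hexp : exp (-(2 * x)) = exp (-x) / exp x := by
    rw [← exp_sub]
    ring_nf
  rw [tanh_eq, hexp]
  field_simp

lemma inv_one_sub_pow_eight_sub_one {q : ℝ} (hq : 0 < q) :
    (1 - ((1 - q) / (1 + q)) ^ 8)⁻¹ - 1 = 1 / 16 * q⁻¹ - 1 / 2 + etaCoeff q * q := by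
  have hone_sub : 1 - ((1 - q) / (1 + q)) ^ 8 =
      16 * q * (q ^ 6 + 7 * q ^ 4 + 7 * q ^ 2 + 1) / (1 + q) ^ 8 := by
    field_simp
    ring
  rw [hone_sub, etaCoeff]
  field_simp
  ring

theorem one_div_sq_sub_one_lt (hr : r ∈ Ioo 0 1) :
    1 / r ^ 2 - 1 <
      1 / 16 * exp (2 * mu r) - 1 / 2 + etaCoeff (exp (-(2 * mu r))) * exp (-(2 * mu r)) := by
  have htanh : tanh (mu r) ^ 8 < 1 := by
    rw [pow_mul _ 2 4]
    exact pow_lt_one₀ (sq_nonneg _) (tanh_sq_lt_one _) (by norm_num)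
  calc 1 / r ^ 2 - 1 < (1 - tanh (mu r) ^ 8)⁻¹ - 1 := by
        rw [one_div]
        have hlt : 1 - tanh (mu r) ^ 8 < r ^ 2 := sub_lt_comm.1 (one_sub_sq_lt_tanh_mu_pow_eight hr)
        exact sub_lt_sub_right (inv_strictAnti₀ (sub_pos.2 htanh) hlt) 1
    _ = 1 / 16 * exp (2 * mu r) - 1 / 2 +
          etaCoeff (exp (-(2 * mu r))) * exp (-(2 * mu r)) := by
        rw [tanh_eq_one_sub_exp_div, inv_one_sub_pow_eight_sub_one (exp_pos _), ← exp_neg, neg_neg]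

lemma one_div_sqrt_one_add_mem_Ioo {t : ℝ} (ht : 0 < t) : 1 / √(1 + t) ∈ Ioo 0 1 := by
  have hlt : 1 < √(1 + t) := lt_sqrt_of_sq_lt (by linarith)
  exact ⟨by positivity, (div_lt_one (by positivity)).2 hlt⟩

theorem stmt_16_general (eta : ℝ → ℝ → ℝ)
    (heta : ∀ K t : ℝ, 0 < K → 0 < t → ∀ u ∈ Ioo (0 : ℝ) 1,
      mu u = K * mu (1 / √(1 + t)) → eta K t = 1 / u ^ 2 - 1)
    {t K : ℝ} (ht : 0 < t) (hK : 0 < K) :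
    eta K t < 1 / 16 * exp (2 * K * mu (1 / √(1 + t))) - 1 / 2 +
        etaCoeff (exp (-(2 * K * mu (1 / √(1 + t))))) * exp (-(2 * K * mu (1 / √(1 + t)))) ∧
      etaCoeff (exp (-(2 * K * mu (1 / √(1 + t))))) < 21 / 16 := by
  obtain ⟨u, hu, hmu⟩ := surjOn_mu (mul_pos hK (mu_pos (one_div_sqrt_one_add_mem_Ioo ht)))
  refine ⟨?_, etaCoeff_lt (exp_ne_zero _)⟩
  rw [heta K t hK ht u hu hmu, mul_assoc 2 K, ← hmu]
  exact one_div_sq_sub_one_lt hu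

end

theorem stmt_16 (eta : ℝ → ℝ → ℝ)
    (heta : ∀ K t : ℝ, 0 < K → 0 < t → ∀ u ∈ Set.Ioo (0:ℝ) 1,
      mu u = K * mu (1 / Real.sqrt (1 + t)) → eta K t = 1 / u ^ 2 - 1) :
    ∀ t K : ℝ, 0 < t → 1 < K →
      eta K t < 1 / 16 * Real.exp (2 * K * mu (1 / Real.sqrt (1 + t))) - 1 / 2 +
        (1 / 16 * (1 + 4 * (5 * Real.exp (-(8 * K * mu (1 / Real.sqrt (1 + t)))) +
            14 * Real.exp (-(4 * K * mu (1 / Real.sqrt (1 + t)))) + 5) /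
          (Real.exp (-(12 * K * mu (1 / Real.sqrt (1 + t)))) +
            7 * Real.exp (-(8 * K * mu (1 / Real.sqrt (1 + t)))) +
            7 * Real.exp (-(4 * K * mu (1 / Real.sqrt (1 + t)))) + 1))) *
          Real.exp (-(2 * K * mu (1 / Real.sqrt (1 + t)))) ∧
      1 / 16 * (1 + 4 * (5 * Real.exp (-(8 * K * mu (1 / Real.sqrt (1 + t)))) +
            14 * Real.exp (-(4 * K * mu (1 / Real.sqrt (1 + t)))) + 5) /
          (Real.exp (-(12 * K * mu (1 / Real.sqrt (1 + t)))) +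
            7 * Real.exp (-(8 * K * mu (1 / Real.sqrt (1 + t)))) +
            7 * Real.exp (-(4 * K * mu (1 / Real.sqrt (1 + t)))) + 1)) < 21 / 16 := by
  intro t K ht hK
  simpa only [etaCoeff_exp] using stmt_16_general eta heta ht (one_pos.trans hK)
end

section
/- Fix t > 0. The function f(K) = 16^{1/K}·η_K(t)/(t^{1/K}·(1+t)^{K−1/K}) is strictly increasing and convex on [1, ∞), with f(1) = 16 and f(K) → ∞ as K → ∞, so f maps [1, ∞) onto [16, ∞). In particular, for every K > 1, η_K(t) > 16^{1−1/K}·t^{1/K}·(1+t)^{K−1/K}. -/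
open Set Filter

/-!
In the parameter `x = r²`, write `B = (E - (1 - x) 𝒦) / x`, where `E` is the complete elliptic
integral of the second kind. Put `y = μ⁻¹(K μ(x))`, so that `η_K(t) = (1 - y) / y` for
`x = 1 / (1 + t)`. Legendre's relation yields
`μ' = -π² / (8 x (1 - x) 𝒦²)`, hence the logarithm `φ` of the function in question satisfies
`φ'(K) = log x - (8 μ(x) / π²) (c / μ(y)² - 𝒦(y)²)` with `c = π² / 8 * log (16 / (1 - x)) * μ(x)`.

Since `y` decreases in `K`, log-convexity reduces to `c / μ² - 𝒦²` being increasing on `(0, 1)`,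
that is, to `x B(x) 𝒦(1 - x)³ < 2 c / π`. The left side is less than its limit `(π / 2)³` at `1`,
and `c ≥ (π / 2)⁴` is equivalent to the classical bound `μ(x) ≤ log 4 - (log x) / 2` at `1 - x`.
Finally `φ'(1) ≥ 0` says `4 / π * 𝒦(x) 𝒦(1 - x) ≥ log 16 - log (x (1 - x))`, which holds because
the difference of the two sides tends to `0` at both ends and increases up to `x = 1 / 2`.
-/

section Development

open Real Topology MeasureTheory

open scoped Interval

lemma monotoneOn_of_hasDerivAt_nonneg {f f' : ℝ → ℝ} {D : Set ℝ} (hD : Convex ℝ D)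
    (hf : ∀ x ∈ D, HasDerivAt f (f' x) x) (hf' : ∀ x ∈ interior D, 0 ≤ f' x) :
    MonotoneOn f D :=
  monotoneOn_of_hasDerivWithinAt_nonneg hD (fun x hx ↦ (hf x hx).continuousAt.continuousWithinAt)
    (fun x hx ↦ (hf x (interior_subset hx)).hasDerivWithinAt) hf'

lemma antitoneOn_of_hasDerivAt_nonpos {f f' : ℝ → ℝ} {D : Set ℝ} (hD : Convex ℝ D)
    (hf : ∀ x ∈ D, HasDerivAt f (f' x) x) (hf' : ∀ x ∈ interior D, f' x ≤ 0) :
    AntitoneOn f D :=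
  antitoneOn_of_hasDerivWithinAt_nonpos hD (fun x hx ↦ (hf x hx).continuousAt.continuousWithinAt)
    (fun x hx ↦ (hf x (interior_subset hx)).hasDerivWithinAt) hf'

lemma strictMonoOn_of_hasDerivAt_pos {f f' : ℝ → ℝ} {D : Set ℝ} (hD : Convex ℝ D)
    (hf : ∀ x ∈ D, HasDerivAt f (f' x) x) (hf' : ∀ x ∈ interior D, 0 < f' x) :
    StrictMonoOn f D :=
  strictMonoOn_of_hasDerivWithinAt_pos hD (fun x hx ↦ (hf x hx).continuousAt.continuousWithinAt)
    (fun x hx ↦ (hf x (interior_subset hx)).hasDerivWithinAt) hf'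

lemma strictAntiOn_of_hasDerivAt_neg {f f' : ℝ → ℝ} {D : Set ℝ} (hD : Convex ℝ D)
    (hf : ∀ x ∈ D, HasDerivAt f (f' x) x) (hf' : ∀ x ∈ interior D, f' x < 0) :
    StrictAntiOn f D :=
  strictAntiOn_of_hasDerivWithinAt_neg hD (fun x hx ↦ (hf x hx).continuousAt.continuousWithinAt)
    (fun x hx ↦ (hf x (interior_subset hx)).hasDerivWithinAt) hf'

section OrderTopology

variable {α β : Type*} [LinearOrder α] [DenselyOrdered α] [TopologicalSpace α] [OrderTopology α]
  [Preorder β] [TopologicalSpace β] [ClosedIciTopology β] {f g : α → β} {a b x : α} {l : β}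

lemma le_of_antitoneOn_Ioo_of_tendsto (hf : AntitoneOn f (Ioo a b))
    (hfg : ∀ y ∈ Ioo a b, f y ≤ g y) (hg : Tendsto g (𝓝[>] a) (𝓝 l)) (hx : x ∈ Ioo a b) :
    f x ≤ l := by
  have : (𝓝[>] a).NeBot := nhdsGT_neBot_of_exists_gt ⟨x, hx.1⟩
  refine ge_of_tendsto hg ?_
  filter_upwards [Ioo_mem_nhdsGT hx.1] with y hy
  have hy' : y ∈ Ioo a b := ⟨hy.1, hy.2.trans hx.2⟩
  exact (hf hy' hx hy.2.le).trans (hfg y hy')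

lemma lt_of_strictAntiOn_Ioo_of_tendsto (hf : StrictAntiOn f (Ioo a b))
    (hl : Tendsto f (𝓝[>] a) (𝓝 l)) (hx : x ∈ Ioo a b) : f x < l := by
  obtain ⟨y, hay, hyx⟩ := exists_between hx.1
  have hy : y ∈ Ioo a b := ⟨hay, hyx.trans hx.2⟩
  exact (hf hy hx hyx).trans_le
    (le_of_antitoneOn_Ioo_of_tendsto hf.antitoneOn (fun _ _ ↦ le_rfl) hl hy)

end OrderTopology

lemma tendsto_one_sub_nhdsGT_zero : Tendsto (fun x : ℝ ↦ 1 - x) (𝓝[>] 0) (𝓝[<] 1) := by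
  have hcont : Continuous fun x : ℝ ↦ 1 - x := by fun_prop
  refine tendsto_nhdsWithin_iff.2 ⟨?_, ?_⟩
  · simpa using (hcont.tendsto 0).mono_left nhdsWithin_le_nhds
  · filter_upwards [self_mem_nhdsWithin] with x (hx : 0 < x)
    exact sub_lt_self 1 hx

lemma tendsto_mul_log_nhdsGT_zero : Tendsto (fun x : ℝ ↦ x * log x) (𝓝[>] 0) (𝓝 0) := by
  simpa using (continuous_mul_log.tendsto 0).mono_left (nhdsWithin_le_nhds (s := Ioi 0))

lemma convexOn_exp_comp {E : Type*} [AddCommMonoid E] [SMul ℝ E] {s : Set E} {f : E → ℝ}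
    (hf : ConvexOn ℝ s f) :
    ConvexOn ℝ s fun x ↦ exp (f x) :=
  ⟨hf.1, fun _ hx _ hy _ _ ha hb hab ↦ (exp_le_exp.2 (hf.2 hx hy ha hb hab)).trans
    (convexOn_exp.2 (mem_univ _) (mem_univ _) ha hb hab)⟩

lemma tendsto_atTop_of_convexOn_Ici {f : ℝ → ℝ} {a b : ℝ} (hf : ConvexOn ℝ (Ici a) f)
    (hab : a < b) (hfab : f a < f b) : Tendsto f atTop atTop := by
  set s := (f b - f a) / (b - a)
  have hs : 0 < s := div_pos (sub_pos.2 hfab) (sub_pos.2 hab)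
  have above_secant : ∀ x, b < x → s * (x - a) + f a ≤ f x := fun x hx ↦ by
    have hax : a < x := hab.trans hx
    have hsec := hf.secant_mono self_mem_Ici hab.le hax.le hab.ne' hax.ne' hx.le
    rw [le_div_iff₀ (sub_pos.2 hax)] at hsec
    linarith
  refine tendsto_atTop_mono' atTop ((eventually_gt_atTop b).mono above_secant) ?_
  exact tendsto_atTop_add_const_right _ _
    ((tendsto_atTop_add_const_right _ _ tendsto_id).const_mul_atTop hs)

lemma log_sixteen : log 16 = 2 * log 4 := by
  rw [show (16 : ℝ) = 4 ^ 2 by norm_num, log_pow, Nat.cast_ofNat]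

lemma sqrt_mem_Ioo {x : ℝ} (hx : x ∈ Ioo 0 1) : √x ∈ Ioo 0 1 :=
  ⟨sqrt_pos.2 hx.1, (sqrt_lt' one_pos).2 (by simpa using hx.2)⟩

lemma one_div_one_add_mem_Ioo {t : ℝ} (ht : 0 < t) : 1 / (1 + t) ∈ Ioo 0 1 :=
  ⟨by positivity, (div_lt_one (by positivity)).2 (lt_add_of_pos_right 1 ht)⟩

lemma rpow_one_sub_mul_lt_of_lt_rpow_mul_div {a b d p : ℝ} (ha : 0 < a) (hd : 0 < d)
    (h : a < a ^ p * b / d) : a ^ (1 - p) * d < b := by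
  rw [rpow_sub ha, rpow_one, div_mul_eq_mul_div, div_lt_iff₀ (rpow_pos_of_pos ha p), mul_comm b]
  rwa [lt_div_iff₀ hd] at h

/-! ### Complete elliptic integrals -/

/-- The complete elliptic integral of the first kind as a function of the parameter `x = r²`. -/
noncomputable def ellipticK (x : ℝ) : ℝ :=
  ∫ θ in (0 : ℝ)..(π / 2), (1 - x * sin θ ^ 2) ^ (-(1/2) : ℝ)

/-- The associated complete elliptic integral `B = (E - (1 - x) 𝒦) / x`, written as an integral so
that it also makes sense at `x = 0`. It is, up to a factor, the derivative of `ellipticK`. -/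
noncomputable def ellipticB (x : ℝ) : ℝ :=
  ∫ θ in (0 : ℝ)..(π / 2), cos θ ^ 2 * (1 - x * sin θ ^ 2) ^ (-(1/2) : ℝ)

lemma one_sub_le_one_sub_mul_sin_sq {x M : ℝ} (hx : x ≤ M) (hM : 0 ≤ M) (θ : ℝ) :
    1 - M ≤ 1 - x * sin θ ^ 2 := by
  nlinarith [sin_sq_le_one θ, sq_nonneg (sin θ)]

lemma one_sub_mul_sin_sq_pos_s17 {x : ℝ} (hx : x < 1) (θ : ℝ) : 0 < 1 - x * sin θ ^ 2 := by
  have := one_sub_le_one_sub_mul_sin_sq (le_max_left x 0) (le_max_right x 0) θ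
  have := max_lt hx one_pos
  linarith

@[fun_prop]
lemma continuous_one_sub_mul_sin_sq_rpow {x : ℝ} (hx : x < 1) (p : ℝ) :
    Continuous fun θ : ℝ ↦ (1 - x * sin θ ^ 2) ^ p :=
  Continuous.rpow_const (by fun_prop) fun θ ↦ Or.inl (one_sub_mul_sin_sq_pos_s17 hx θ).ne'

lemma hasDerivAt_integral_mul_one_sub_mul_sin_sq_rpow {g : ℝ → ℝ} {a b p x : ℝ}
    (hg : IntervalIntegrable g volume a b) (hp : p ≤ 1) (hx : x < 1) :
    HasDerivAt (fun x ↦ ∫ θ in a..b, g θ * (1 - x * sin θ ^ 2) ^ p)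
      (-p * ∫ θ in a..b, g θ * (sin θ ^ 2 * (1 - x * sin θ ^ 2) ^ (p - 1))) x := by
  obtain ⟨M, hxM, hM1⟩ := exists_between (max_lt hx one_pos)
  have hM0 : 0 ≤ M := (le_max_right x 0).trans hxM.le
  have hs : Iio M ∈ 𝓝 x := Iio_mem_nhds ((le_max_left x 0).trans_lt hxM)
  have hg' : AEStronglyMeasurable g (volume.restrict (Ι a b)) := hg.def'.aestronglyMeasurable
  rw [← intervalIntegral.integral_const_mul]
  refine (intervalIntegral.hasDerivAt_integral_of_dominated_loc_of_deriv_le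
    (F := fun y θ ↦ g θ * (1 - y * sin θ ^ 2) ^ p)
    (F' := fun y θ ↦ -p * (g θ * (sin θ ^ 2 * (1 - y * sin θ ^ 2) ^ (p - 1))))
    (bound := fun θ ↦ |p| * (|g θ| * (1 - M) ^ (p - 1))) hs ?_ ?_ ?_ ?_ ?_ ?_).2
  · filter_upwards [hs] with y hy
    exact hg'.mul (continuous_one_sub_mul_sin_sq_rpow (hy.trans hM1) p).aestronglyMeasurable
  · exact hg.mul_continuousOn (continuous_one_sub_mul_sin_sq_rpow hx p).continuousOn
  · exact (hg'.mul
      (Continuous.aestronglyMeasurable (by fun_prop (disch := assumption)))).const_mul _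
  · refine Eventually.of_forall fun θ _ y hy ↦ ?_
    have hΔ := one_sub_le_one_sub_mul_sin_sq (le_of_lt hy) hM0 θ
    have hpow : (1 - y * sin θ ^ 2) ^ (p - 1) ≤ (1 - M) ^ (p - 1) :=
      rpow_le_rpow_of_nonpos (by linarith) hΔ (by linarith)
    have hpow0 : 0 ≤ (1 - y * sin θ ^ 2) ^ (p - 1) := rpow_nonneg (by linarith) _
    rw [norm_mul, norm_mul, norm_neg, norm_of_nonneg (mul_nonneg (sq_nonneg (sin θ)) hpow0)]
    simp only [norm_eq_abs]
    gcongr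
    exact (mul_le_of_le_one_left hpow0 (sin_sq_le_one θ)).trans hpow
  · exact (hg.abs.mul_const _).const_mul _
  · refine Eventually.of_forall fun θ _ y hy ↦ ?_
    have hΔ : HasDerivAt (fun y ↦ 1 - y * sin θ ^ 2) (-sin θ ^ 2) y := by
      simpa using ((hasDerivAt_id y).mul_const (sin θ ^ 2)).const_sub 1
    refine ((hΔ.rpow_const (Or.inl (one_sub_mul_sin_sq_pos_s17 (hy.trans hM1) θ).ne')).const_mul
      (g θ)).congr_deriv ?_
    ring

lemma rpow_neg_half_eq_mul {a : ℝ} (ha : 0 < a) :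
    a ^ (-(1/2) : ℝ) = a * a ^ (-(3/2) : ℝ) := by
  rw [← rpow_one_add' ha.le (by norm_num)]
  norm_num

-- Integration by parts, with antiderivative `sin θ * cos θ * (1 - x * sin θ ^ 2) ^ (-1/2)`.
lemma ellipticB_eq_one_sub_mul_integral {x : ℝ} (hx : x < 1) :
    ellipticB x = (1 - x) * ∫ θ in (0 : ℝ)..(π / 2),
      sin θ ^ 2 * (1 - x * sin θ ^ 2) ^ (-(3/2) : ℝ) := by
  have hderiv : ∀ θ : ℝ, HasDerivAt (fun θ ↦ sin θ * cos θ * (1 - x * sin θ ^ 2) ^ (-(1/2) : ℝ))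
      (cos θ ^ 2 * (1 - x * sin θ ^ 2) ^ (-(1/2) : ℝ) -
        (1 - x) * (sin θ ^ 2 * (1 - x * sin θ ^ 2) ^ (-(3/2) : ℝ))) θ := fun θ ↦ by
    have hΔ := one_sub_mul_sin_sq_pos_s17 hx θ
    have h := ((hasDerivAt_sin θ).mul (hasDerivAt_cos θ)).mul
      (((((hasDerivAt_sin θ).pow 2).const_mul x).const_sub 1).rpow_const (p := -(1/2))
        (Or.inl hΔ.ne'))
    refine h.congr_deriv ?_
    simp only [Pi.mul_apply, Pi.pow_apply]
    rw [show (-(1/2) - 1 : ℝ) = -(3/2) by norm_num, rpow_neg_half_eq_mul hΔ]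
    linear_combination x * sin θ ^ 2 * (1 - x * sin θ ^ 2) ^ (-(3/2) : ℝ) * cos_sq' θ
  have hint := intervalIntegral.integral_eq_sub_of_hasDerivAt (a := 0) (b := π / 2)
    (fun θ _ ↦ hderiv θ) (Continuous.intervalIntegrable (by fun_prop (disch := assumption)) _ _)
  rw [intervalIntegral.integral_sub
      (Continuous.intervalIntegrable (by fun_prop (disch := assumption)) _ _)
      (Continuous.intervalIntegrable (by fun_prop (disch := assumption)) _ _),
    intervalIntegral.integral_const_mul] at hint
  simpa [ellipticB, sub_eq_zero] using hint

lemma hasDerivAt_ellipticK {x : ℝ} (hx : x < 1) :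
    HasDerivAt ellipticK (ellipticB x / (2 * (1 - x))) x := by
  have h := hasDerivAt_integral_mul_one_sub_mul_sin_sq_rpow (p := -(1/2))
    (intervalIntegrable_const (c := (1 : ℝ)) (a := 0) (b := π / 2)) (by norm_num) hx
  simp only [one_mul] at h
  refine HasDerivAt.congr_deriv (f := ellipticK) h ?_
  have h1x : 1 - x ≠ 0 := (sub_pos.2 hx).ne'
  rw [show (-(1/2) - 1 : ℝ) = -(3/2) by norm_num, ellipticB_eq_one_sub_mul_integral hx,
    mul_comm 2, mul_div_mul_left _ _ h1x]
  ring

lemma differentiableAt_ellipticB {x : ℝ} (hx : x < 1) : DifferentiableAt ℝ ellipticB x :=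
  (hasDerivAt_integral_mul_one_sub_mul_sin_sq_rpow
    (Continuous.intervalIntegrable (by fun_prop) _ _) (by norm_num) hx).differentiableAt

lemma hasDerivAt_mul_ellipticB {x : ℝ} (hx : x < 1) :
    HasDerivAt (fun x ↦ x * ellipticB x) (ellipticK x / 2) x := by
  have hB' : HasDerivAt ellipticB _ x :=
    hasDerivAt_integral_mul_one_sub_mul_sin_sq_rpow (p := -(1/2)) (g := fun θ ↦ cos θ ^ 2)
      (a := 0) (b := π / 2) (Continuous.intervalIntegrable (by fun_prop) _ _) (by norm_num) hx
  have hint : ∫ θ in (0 : ℝ)..(π / 2),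
      x * (cos θ ^ 2 * (sin θ ^ 2 * (1 - x * sin θ ^ 2) ^ (-(3/2) : ℝ))) =
      ∫ θ in (0 : ℝ)..(π / 2), ((1 - x * sin θ ^ 2) ^ (-(1/2) : ℝ) -
        (1 - x) * (sin θ ^ 2 * (1 - x * sin θ ^ 2) ^ (-(3/2) : ℝ)) -
        cos θ ^ 2 * (1 - x * sin θ ^ 2) ^ (-(1/2) : ℝ)) := by
    congr 1 with θ
    rw [rpow_neg_half_eq_mul (one_sub_mul_sin_sq_pos_s17 hx θ)]
    linear_combination (1 - x * sin θ ^ 2) ^ (-(3/2) : ℝ) * cos_sq' θ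
  rw [intervalIntegral.integral_const_mul, intervalIntegral.integral_sub,
    intervalIntegral.integral_sub, intervalIntegral.integral_const_mul,
    ← ellipticB_eq_one_sub_mul_integral hx] at hint
  · refine ((hasDerivAt_id x).mul hB').congr_deriv ?_
    rw [show (-(1/2) - 1 : ℝ) = -(3/2) by norm_num]
    simp only [id, one_mul]
    rw [ellipticK]
    unfold ellipticB at hint ⊢
    linear_combination 1 / 2 * hint
  all_goals exact Continuous.intervalIntegrable (by fun_prop (disch := assumption)) _ _

lemma hasDerivAt_ellipticB {x : ℝ} (hx0 : x ≠ 0) (hx : x < 1) :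
    HasDerivAt ellipticB ((ellipticK x / 2 - ellipticB x) / x) x := by
  have hB := (differentiableAt_ellipticB hx).hasDerivAt
  have hprod := ((hasDerivAt_id x).mul hB).unique (hasDerivAt_mul_ellipticB hx)
  simp only [id, one_mul] at hprod
  refine hB.congr_deriv ?_
  rw [eq_div_iff hx0]
  linarith

lemma hasDerivAt_ellipticK_one_sub {x : ℝ} (hx : 0 < x) :
    HasDerivAt (fun x ↦ ellipticK (1 - x)) (-(ellipticB (1 - x) / (2 * x))) x := by
  simpa using (hasDerivAt_ellipticK (sub_lt_self 1 hx)).comp_const_sub 1 x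

lemma hasDerivAt_mul_ellipticB_one_sub {x : ℝ} (hx : 0 < x) :
    HasDerivAt (fun x ↦ (1 - x) * ellipticB (1 - x)) (-(ellipticK (1 - x) / 2)) x :=
  (hasDerivAt_mul_ellipticB (sub_lt_self 1 hx)).comp_const_sub 1 x

lemma ellipticK_zero : ellipticK 0 = π / 2 := by simp [ellipticK]

lemma ellipticK_pos {x : ℝ} (hx : x < 1) : 0 < ellipticK x :=
  intervalIntegral.intervalIntegral_pos_of_pos
    (Continuous.intervalIntegrable (by fun_prop (disch := assumption)) _ _)
    (fun θ ↦ rpow_pos_of_pos (one_sub_mul_sin_sq_pos_s17 hx θ) _) pi_div_two_pos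

lemma ellipticB_pos {x : ℝ} (hx : x < 1) : 0 < ellipticB x :=
  intervalIntegral.intervalIntegral_pos_of_pos_on
    (Continuous.intervalIntegrable (by fun_prop (disch := assumption)) _ _)
    (fun θ hθ ↦ mul_pos (pow_pos (cos_pos_of_mem_Ioo ⟨by linarith [hθ.1, pi_pos], hθ.2⟩) 2)
      (rpow_pos_of_pos (one_sub_mul_sin_sq_pos_s17 hx θ) _)) pi_div_two_pos

lemma strictMonoOn_ellipticK : StrictMonoOn ellipticK (Iio 1) := by
  refine strictMonoOn_of_hasDerivAt_pos (convex_Iio 1) (fun x hx ↦ hasDerivAt_ellipticK hx) ?_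
  rw [interior_Iio]
  intro x hx
  exact div_pos (ellipticB_pos hx) (mul_pos two_pos (sub_pos.2 hx))

lemma pi_div_two_le_ellipticK {x : ℝ} (hx0 : 0 ≤ x) (hx : x < 1) : π / 2 ≤ ellipticK x :=
  ellipticK_zero ▸ strictMonoOn_ellipticK.monotoneOn (mem_Iio.2 one_pos) hx hx0

lemma tendsto_ellipticK_nhdsGT_zero : Tendsto ellipticK (𝓝[>] 0) (𝓝 (π / 2)) :=
  ellipticK_zero ▸ (hasDerivAt_ellipticK one_pos).continuousAt.tendsto.mono_left nhdsWithin_le_nhds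

lemma ellipticB_le_half_ellipticK {x : ℝ} (hx : x ∈ Ioo 0 1) : ellipticB x ≤ ellipticK x / 2 := by
  have hmono : MonotoneOn (fun x ↦ x * (ellipticK x / 2) - x * ellipticB x) (Ico 0 1) := by
    refine monotoneOn_of_hasDerivAt_nonneg (f' := fun x ↦ x * (ellipticB x / (2 * (1 - x)) / 2))
      (convex_Ico 0 1) (fun y hy ↦ ?_) ?_
    · refine (((hasDerivAt_id y).mul ((hasDerivAt_ellipticK hy.2).div_const 2)).sub
        (hasDerivAt_mul_ellipticB hy.2)).congr_deriv ?_
      simp only [id]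
      ring
    · rw [interior_Ico]
      intro y hy
      have := ellipticB_pos hy.2
      have := sub_pos.2 hy.2
      have := hy.1
      positivity
  have h := hmono ⟨le_rfl, one_pos⟩ (Ioo_subset_Ico_self hx) hx.1.le
  simp only [zero_mul, sub_zero, ← mul_sub] at h
  exact sub_nonneg.1 (nonneg_of_mul_nonneg_right h hx.1)

lemma ellipticB_lt_ellipticK {x : ℝ} (hx : x ∈ Ioo 0 1) : ellipticB x < ellipticK x := by
  linarith [ellipticB_le_half_ellipticK hx, ellipticK_pos hx.2]

lemma one_sub_mul_ellipticK_sq_le {x : ℝ} (hx : x ∈ Ico 0 1) :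
    (1 - x) * ellipticK x ^ 2 ≤ (π / 2) ^ 2 := by
  have hanti : AntitoneOn (fun x ↦ (1 - x) * ellipticK x ^ 2) (Ico 0 1) := by
    refine antitoneOn_of_hasDerivAt_nonpos
      (f' := fun x ↦ ellipticK x * (ellipticB x - ellipticK x)) (convex_Ico 0 1) (fun y hy ↦ ?_) ?_
    · have := sub_pos.2 hy.2
      refine (((hasDerivAt_id y).const_sub 1).mul
        ((hasDerivAt_ellipticK hy.2).pow 2)).congr_deriv ?_
      simp only [id, Pi.pow_apply]
      field_simp
      ring
    · rw [interior_Ico]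
      exact fun y hy ↦ mul_nonpos_of_nonneg_of_nonpos (ellipticK_pos hy.2).le
        (sub_nonpos.2 (ellipticB_lt_ellipticK hy).le)
  simpa [ellipticK_zero] using hanti ⟨le_rfl, one_pos⟩ hx hx.1

-- The right-hand side is the complete elliptic integral of the second kind.
lemma sqrt_one_sub_mul_ellipticK_le {x : ℝ} (hx : x ∈ Ico 0 1) :
    √(1 - x) * ellipticK x ≤ x * ellipticB x + (1 - x) * ellipticK x := by
  have hmono : MonotoneOn (fun x ↦ x * ellipticB x + (1 - x) * ellipticK x - √(1 - x) * ellipticK x)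
      (Ico 0 1) := by
    refine monotoneOn_of_hasDerivAt_nonneg
      (f' := fun x ↦ (ellipticK x - ellipticB x) / 2 * (1 / √(1 - x) - 1)) (convex_Ico 0 1)
      (fun y hy ↦ ?_) ?_
    · have h1y := sub_pos.2 hy.2
      have hsqrt := sqrt_pos.2 h1y
      refine (((hasDerivAt_mul_ellipticB hy.2).add
        (((hasDerivAt_id y).const_sub 1).mul (hasDerivAt_ellipticK hy.2))).sub
        ((((hasDerivAt_id y).const_sub 1).sqrt h1y.ne').mul
          (hasDerivAt_ellipticK hy.2))).congr_deriv ?_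
      simp only [id]
      rw [← sq_sqrt h1y.le, sqrt_sq hsqrt.le]
      field_simp
      ring
    · rw [interior_Ico]
      intro y hy
      refine mul_nonneg (half_pos (sub_pos.2 (ellipticB_lt_ellipticK hy))).le (sub_nonneg.2 ?_)
      exact (one_le_div (sqrt_pos.2 (sub_pos.2 hy.2))).2
        (sqrt_le_one.2 (sub_le_self 1 hy.1.le))
  simpa using hmono ⟨le_rfl, one_pos⟩ hx hx.1

lemma antitoneOn_ellipticB_div_ellipticK :
    AntitoneOn (fun x ↦ ellipticB x / ellipticK x) (Ioo 0 1) := by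
  refine antitoneOn_of_hasDerivAt_nonpos (f' := fun x ↦ -(((x * ellipticB x +
      (1 - x) * ellipticK x) ^ 2 - (√(1 - x) * ellipticK x) ^ 2) /
        (2 * x ^ 2 * (1 - x) * ellipticK x ^ 2))) (convex_Ioo 0 1) (fun y hy ↦ ?_) ?_
  · have hy0 := hy.1
    have h1y := sub_pos.2 hy.2
    have hK := ellipticK_pos hy.2
    refine ((hasDerivAt_ellipticB hy.1.ne' hy.2).div (hasDerivAt_ellipticK hy.2)
      hK.ne').congr_deriv ?_
    rw [mul_pow, sq_sqrt h1y.le]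
    field_simp
    ring
  · rw [interior_Ioo]
    intro y hy
    have h1y := sub_pos.2 hy.2
    have hK := ellipticK_pos hy.2
    have := pow_le_pow_left₀ (by positivity)
      (sqrt_one_sub_mul_ellipticK_le (Ioo_subset_Ico_self hy)) 2
    exact neg_nonpos.2 (div_nonneg (sub_nonneg.2 this) (by positivity))

/-! ### Asymptotics at the logarithmic singularity -/

lemma cos_sq_mul_rpow_neg_half_le_one {x : ℝ} (hx : x ∈ Ico 0 1) (θ : ℝ) :
    cos θ ^ 2 * (1 - x * sin θ ^ 2) ^ (-(1/2) : ℝ) ≤ 1 := by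
  have hΔ := one_sub_mul_sin_sq_pos_s17 hx.2 θ
  have hcos : cos θ ^ 2 ≤ 1 - x * sin θ ^ 2 := by
    nlinarith [cos_sq' θ, hx.2, sq_nonneg (sin θ)]
  calc cos θ ^ 2 * (1 - x * sin θ ^ 2) ^ (-(1/2) : ℝ)
      ≤ (1 - x * sin θ ^ 2) * (1 - x * sin θ ^ 2) ^ (-(1/2) : ℝ) := by gcongr
    _ = (1 - x * sin θ ^ 2) ^ (1/2 : ℝ) := by
        rw [← rpow_one_add' hΔ.le (by norm_num)]
        norm_num
    _ ≤ 1 := rpow_le_one hΔ.le (sub_le_self 1 (mul_nonneg hx.1 (sq_nonneg _))) (by norm_num)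

lemma tendsto_cos_sq_mul_rpow_neg_half {θ : ℝ} (hθ : 0 ≤ cos θ) :
    Tendsto (fun x ↦ cos θ ^ 2 * (1 - x * sin θ ^ 2) ^ (-(1/2) : ℝ)) (𝓝 1) (𝓝 (cos θ)) := by
  rcases hθ.eq_or_lt with hcos | hcos
  · simp [← hcos]
  · have hΔ : 1 - 1 * sin θ ^ 2 = cos θ ^ 2 := by rw [one_mul, cos_sq']
    have hcont : ContinuousAt (fun x ↦ cos θ ^ 2 * (1 - x * sin θ ^ 2) ^ (-(1/2) : ℝ)) 1 :=
      continuousAt_const.mul (ContinuousAt.rpow_const (by fun_prop)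
        (Or.inl (hΔ ▸ (pow_pos hcos 2).ne')))
    convert hcont.tendsto using 2
    rw [hΔ, rpow_neg (sq_nonneg _), ← sqrt_eq_rpow, sqrt_sq hθ]
    field_simp

lemma tendsto_integral_mul_cos_sq_mul_rpow_neg_half {w : ℝ → ℝ}
    (hw : IntervalIntegrable w volume 0 (π / 2)) :
    Tendsto (fun x ↦ ∫ θ in (0 : ℝ)..(π / 2),
        w θ * (cos θ ^ 2 * (1 - x * sin θ ^ 2) ^ (-(1/2) : ℝ)))
      (𝓝[<] 1) (𝓝 (∫ θ in (0 : ℝ)..(π / 2), w θ * cos θ)) := by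
  have hmem : ∀ᶠ x : ℝ in 𝓝[<] 1, x ∈ Ico 0 1 := Ico_mem_nhdsLT one_pos
  refine intervalIntegral.tendsto_integral_filter_of_dominated_convergence (fun θ ↦ |w θ|)
    ?_ ?_ hw.abs ?_
  · filter_upwards [hmem] with x hx
    have hx1 := hx.2
    exact hw.def'.aestronglyMeasurable.mul
      (Continuous.aestronglyMeasurable (by fun_prop (disch := assumption)))
  · filter_upwards [hmem] with x hx
    refine Eventually.of_forall fun θ _ ↦ ?_
    have h0 : 0 ≤ cos θ ^ 2 * (1 - x * sin θ ^ 2) ^ (-(1/2) : ℝ) :=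
      mul_nonneg (sq_nonneg _) (rpow_nonneg (one_sub_mul_sin_sq_pos_s17 hx.2 θ).le _)
    rw [norm_mul, norm_eq_abs, norm_of_nonneg h0]
    exact mul_le_of_le_one_right (abs_nonneg _) (cos_sq_mul_rpow_neg_half_le_one hx θ)
  · refine Eventually.of_forall fun θ hθ ↦ ?_
    rw [uIoc_of_le pi_div_two_pos.le] at hθ
    have hcos := cos_nonneg_of_mem_Icc ⟨by linarith [hθ.1, pi_pos], hθ.2⟩
    exact ((tendsto_cos_sq_mul_rpow_neg_half hcos).mono_left nhdsWithin_le_nhds).const_mul _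

lemma tendsto_ellipticB_nhdsLT_one : Tendsto ellipticB (𝓝[<] 1) (𝓝 1) := by
  have h := tendsto_integral_mul_cos_sq_mul_rpow_neg_half (w := fun _ ↦ 1) intervalIntegrable_const
  simp only [one_mul, integral_cos, sin_pi_div_two, sin_zero, sub_zero] at h
  exact h

lemma integral_sin_mul_rpow_neg_half {x : ℝ} (hx : x ∈ Ioo 0 1) :
    ∫ θ in (0 : ℝ)..(π / 2), sin θ * (1 - x * sin θ ^ 2) ^ (-(1/2) : ℝ) =
      (log (1 + √x) - 1 / 2 * log (1 - x)) / √x := by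
  have hx0 := hx.1
  have hx1 := hx.2
  have hderiv : ∀ θ ∈ uIcc 0 (π / 2),
      HasDerivAt (fun θ ↦ -(log (√x * cos θ + √(1 - x * sin θ ^ 2)) / √x))
        (sin θ * (1 - x * sin θ ^ 2) ^ (-(1/2) : ℝ)) θ := fun θ hθ ↦ by
    rw [uIcc_of_le pi_div_two_pos.le] at hθ
    have hcos := cos_nonneg_of_mem_Icc ⟨by linarith [hθ.1, pi_pos], hθ.2⟩
    have hΔ := one_sub_mul_sin_sq_pos_s17 hx.2 θ
    have := sqrt_pos.2 hx.1
    have hsqrtΔ := sqrt_pos.2 hΔ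
    have harg : 0 < √x * cos θ + √(1 - x * sin θ ^ 2) := by positivity
    refine (((((hasDerivAt_cos θ).const_mul √x).add
      (((((hasDerivAt_sin θ).pow 2).const_mul x).const_sub 1).sqrt hΔ.ne')).log
        harg.ne').div_const √x).neg.congr_deriv ?_
    simp only [Pi.pow_apply, Pi.add_apply]
    rw [rpow_neg hΔ.le, ← sqrt_eq_rpow]
    generalize √(1 - x * sin θ ^ 2) = s at *
    field_simp
    linear_combination (-2 * cos θ * sin θ) * sq_sqrt hx.1.le
  rw [intervalIntegral.integral_eq_sub_of_hasDerivAt hderiv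
    (Continuous.intervalIntegrable (by fun_prop (disch := assumption)) _ _)]
  simp only [cos_pi_div_two, sin_pi_div_two, cos_zero, sin_zero]
  norm_num
  rw [log_sqrt (sub_pos.2 hx.2).le, add_comm √x]
  ring

lemma one_add_sin_pos {θ : ℝ} (hθ : θ ∈ Icc 0 (π / 2)) : 0 < 1 + sin θ := by
  linarith [sin_nonneg_of_nonneg_of_le_pi hθ.1 (by linarith [hθ.2, pi_pos])]

lemma intervalIntegrable_inv_one_add_sin :
    IntervalIntegrable (fun θ ↦ (1 + sin θ)⁻¹) volume 0 (π / 2) := by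
  refine ContinuousOn.intervalIntegrable (ContinuousOn.inv₀ (by fun_prop) fun θ hθ ↦ ?_)
  rw [uIcc_of_le pi_div_two_pos.le] at hθ
  exact (one_add_sin_pos hθ).ne'

lemma integral_inv_one_add_sin_mul_cos :
    ∫ θ in (0 : ℝ)..(π / 2), (1 + sin θ)⁻¹ * cos θ = log 2 := by
  have hderiv : ∀ θ ∈ uIcc 0 (π / 2),
      HasDerivAt (fun θ ↦ log (1 + sin θ)) ((1 + sin θ)⁻¹ * cos θ) θ := fun θ hθ ↦ by
    rw [uIcc_of_le pi_div_two_pos.le] at hθ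
    exact (((hasDerivAt_sin θ).const_add 1).log (one_add_sin_pos hθ).ne').congr_deriv (by ring)
  rw [intervalIntegral.integral_eq_sub_of_hasDerivAt hderiv
    (intervalIntegrable_inv_one_add_sin.mul_continuousOn continuousOn_cos)]
  norm_num

lemma ellipticK_eq_add_integral {x : ℝ} (hx : x ∈ Ioo 0 1) :
    ellipticK x = (log (1 + √x) - 1 / 2 * log (1 - x)) / √x + ∫ θ in (0 : ℝ)..(π / 2),
      (1 + sin θ)⁻¹ * (cos θ ^ 2 * (1 - x * sin θ ^ 2) ^ (-(1/2) : ℝ)) := by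
  have hx1 := hx.2
  rw [← integral_sin_mul_rpow_neg_half hx, ← intervalIntegral.integral_add
    (Continuous.intervalIntegrable (by fun_prop (disch := assumption)) _ _)
    (intervalIntegrable_inv_one_add_sin.mul_continuousOn
      (Continuous.continuousOn (by fun_prop (disch := assumption))))]
  refine intervalIntegral.integral_congr fun θ hθ ↦ ?_
  rw [uIcc_of_le pi_div_two_pos.le] at hθ
  have := one_add_sin_pos hθ
  simp only [cos_sq']
  field_simp
  ring

lemma tendsto_log_one_add_sqrt_nhdsLT_one :
    Tendsto (fun x ↦ (log (1 + √x) - 1 / 2 * log (1 - x)) / √x + 1 / 2 * log (1 - x))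
      (𝓝[<] 1) (𝓝 (log 2)) := by
  have hcont : ContinuousAt (fun x ↦ log (1 + √x) / √x -
      1 / 2 * ((1 - x) * log (1 - x)) / (√x * (1 + √x))) 1 := by
    have : Continuous fun x : ℝ ↦ (1 - x) * log (1 - x) :=
      continuous_mul_log.comp (by fun_prop)
    fun_prop (disch := simp)
  have h := hcont.tendsto.mono_left (nhdsWithin_le_nhds (s := Iio 1))
  simp only [sqrt_one, sub_self, zero_mul, mul_zero, zero_div, sub_zero, div_one] at h
  norm_num only at h
  refine h.congr' ?_
  filter_upwards [Ioo_mem_nhdsLT one_pos] with x hx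
  have hsqrt := sqrt_pos.2 hx.1
  field_simp
  linear_combination (-log (1 - x)) * sq_sqrt hx.1.le

lemma tendsto_ellipticK_add_log_nhdsLT_one :
    Tendsto (fun x ↦ ellipticK x + 1 / 2 * log (1 - x)) (𝓝[<] 1) (𝓝 (log 4)) := by
  have h := tendsto_log_one_add_sqrt_nhdsLT_one.add
    (tendsto_integral_mul_cos_sq_mul_rpow_neg_half intervalIntegrable_inv_one_add_sin)
  rw [integral_inv_one_add_sin_mul_cos, ← log_mul two_ne_zero two_ne_zero,
    show (2 * 2 : ℝ) = 4 by norm_num] at h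
  refine h.congr' ?_
  filter_upwards [Ioo_mem_nhdsLT one_pos] with x hx
  rw [ellipticK_eq_add_integral hx]
  ring

lemma tendsto_ellipticK_one_sub_add_log_nhdsGT_zero :
    Tendsto (fun x ↦ ellipticK (1 - x) + 1 / 2 * log x) (𝓝[>] 0) (𝓝 (log 4)) := by
  simpa [Function.comp_def] using
    tendsto_ellipticK_add_log_nhdsLT_one.comp tendsto_one_sub_nhdsGT_zero

/-! ### Legendre's relation and sharp bounds -/

lemma tendsto_one_sub_mul_ellipticB_one_sub_nhdsGT_zero :
    Tendsto (fun x ↦ (1 - x) * ellipticB (1 - x)) (𝓝[>] 0) (𝓝 1) := by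
  simpa using (tendsto_one_sub_nhdsGT_zero.mono_right nhdsWithin_le_nhds).mul
    (tendsto_ellipticB_nhdsLT_one.comp tendsto_one_sub_nhdsGT_zero)

lemma tendsto_mul_ellipticB_mul_ellipticK_one_sub_nhdsGT_zero :
    Tendsto (fun x ↦ x * ellipticB x * ellipticK (1 - x)) (𝓝[>] 0) (𝓝 0) := by
  have hB : Tendsto ellipticB (𝓝[>] 0) (𝓝 (ellipticB 0)) :=
    (differentiableAt_ellipticB one_pos).continuousAt.tendsto.mono_left nhdsWithin_le_nhds
  have hid : Tendsto (fun x : ℝ ↦ x) (𝓝[>] 0) (𝓝 0) := nhdsWithin_le_nhds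
  have h := hB.mul ((hid.mul tendsto_ellipticK_one_sub_add_log_nhdsGT_zero).sub
    (tendsto_mul_log_nhdsGT_zero.const_mul (1 / 2)))
  simp only [zero_mul, mul_zero, sub_zero] at h
  refine h.congr fun x ↦ ?_
  ring

theorem legendre_relation {x : ℝ} (hx : x ∈ Ioo 0 1) :
    x * ellipticB x * ellipticK (1 - x) + (1 - x) * ellipticB (1 - x) * ellipticK x = π / 2 := by
  let L : ℝ → ℝ := fun x ↦
    x * ellipticB x * ellipticK (1 - x) + (1 - x) * ellipticB (1 - x) * ellipticK x
  have hderiv : ∀ y ∈ Ioo (0 : ℝ) 1, HasDerivAt L 0 y := fun y hy ↦ by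
    have hy0 := hy.1
    have h1y := sub_pos.2 hy.2
    refine (((hasDerivAt_mul_ellipticB hy.2).mul (hasDerivAt_ellipticK_one_sub hy.1)).add
      ((hasDerivAt_mul_ellipticB_one_sub hy.1).mul (hasDerivAt_ellipticK hy.2))).congr_deriv ?_
    field_simp
    ring
  have hconst : ∀ y ∈ Ioo (0 : ℝ) 1, L x = L y := fun y hy ↦
    isOpen_Ioo.is_const_of_deriv_eq_zero isPreconnected_Ioo
      (fun z hz ↦ (hderiv z hz).differentiableAt.differentiableWithinAt)
      (fun z hz ↦ (hderiv z hz).deriv) hx hy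
  have hlim : Tendsto L (𝓝[>] 0) (𝓝 (0 + 1 * (π / 2))) :=
    tendsto_mul_ellipticB_mul_ellipticK_one_sub_nhdsGT_zero.add
      (tendsto_one_sub_mul_ellipticB_one_sub_nhdsGT_zero.mul tendsto_ellipticK_nhdsGT_zero)
  rw [zero_add, one_mul] at hlim
  exact tendsto_nhds_unique (tendsto_const_nhds.congr' (eventually_of_mem
    (Ioo_mem_nhdsGT one_pos) hconst)) hlim

lemma strictAntiOn_one_sub_mul_ellipticB_one_sub_mul_ellipticK_pow_three :
    StrictAntiOn (fun x ↦ (1 - x) * ellipticB (1 - x) * ellipticK x ^ 3) (Ioo 0 1) := by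
  refine strictAntiOn_of_hasDerivAt_neg (f' := fun x ↦ -(ellipticK x ^ 2 / 2 *
    (ellipticK x * ellipticK (1 - x) - 3 * (ellipticB x * ellipticB (1 - x)))))
    (convex_Ioo 0 1) (fun y hy ↦ ?_) ?_
  · have h1y := sub_pos.2 hy.2
    refine ((hasDerivAt_mul_ellipticB_one_sub hy.1).mul
      ((hasDerivAt_ellipticK hy.2).pow 3)).congr_deriv ?_
    simp only [Pi.pow_apply]
    field_simp
    push_cast
    ring
  · rw [interior_Ioo]
    intro y hy
    have hK := ellipticK_pos hy.2
    have hK' := ellipticK_pos (Ioo.one_sub_mem hy).2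
    have hprod : ellipticB y * ellipticB (1 - y) ≤ ellipticK y / 2 * (ellipticK (1 - y) / 2) :=
      mul_le_mul (ellipticB_le_half_ellipticK hy) (ellipticB_le_half_ellipticK (Ioo.one_sub_mem hy))
        (ellipticB_pos (Ioo.one_sub_mem hy).2).le (by positivity)
    refine neg_neg_of_pos (mul_pos (by positivity) ?_)
    linarith [mul_pos hK hK']

lemma mul_ellipticB_mul_ellipticK_one_sub_pow_three_lt {x : ℝ} (hx : x ∈ Ioo 0 1) :
    x * ellipticB x * ellipticK (1 - x) ^ 3 < (π / 2) ^ 3 := by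
  have hlim := tendsto_one_sub_mul_ellipticB_one_sub_nhdsGT_zero.mul
    (tendsto_ellipticK_nhdsGT_zero.pow 3)
  rw [one_mul] at hlim
  simpa using lt_of_strictAntiOn_Ioo_of_tendsto
    strictAntiOn_one_sub_mul_ellipticB_one_sub_mul_ellipticK_pow_three hlim (Ioo.one_sub_mem hx)

lemma hasDerivAt_ellipticK_mul_ellipticK_one_sub_add_log {x : ℝ} (hx : x ∈ Ioo 0 1) :
    HasDerivAt (fun x ↦ 2 / π * (ellipticK x * ellipticK (1 - x)) + 1 / 2 * (log x + log (1 - x)))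
      (2 / π * (ellipticB x * ellipticK (1 - x) - ellipticB (1 - x) * ellipticK x)) x := by
  have hx0 := hx.1
  have h1x := sub_pos.2 hx.2
  have := pi_pos
  refine (((hasDerivAt_ellipticK hx.2).mul (hasDerivAt_ellipticK_one_sub hx.1)).const_mul
    (2 / π)).add (((hasDerivAt_log hx.1.ne').add
      (((hasDerivAt_id x).const_sub 1).log h1x.ne')).const_mul (1 / 2)) |>.congr_deriv ?_
  simp only [id]
  field_simp
  linear_combination (-2) * (1 - 2 * x) * legendre_relation hx

lemma monotoneOn_ellipticK_mul_ellipticK_one_sub_add_log :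
    MonotoneOn (fun x ↦ 2 / π * (ellipticK x * ellipticK (1 - x)) + 1 / 2 * (log x + log (1 - x)))
      (Ioc 0 (1 / 2)) := by
  refine monotoneOn_of_hasDerivAt_nonneg (convex_Ioc 0 (1 / 2)) (fun y hy ↦
    hasDerivAt_ellipticK_mul_ellipticK_one_sub_add_log ⟨hy.1, hy.2.trans_lt one_half_lt_one⟩) ?_
  rw [interior_Ioc]
  intro y hy
  have hy1 : y ∈ Ioo 0 1 := ⟨hy.1, hy.2.trans one_half_lt_one⟩
  have hratio := antitoneOn_ellipticB_div_ellipticK hy1 (Ioo.one_sub_mem hy1) (by linarith [hy.2])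
  rw [div_le_div_iff₀ (ellipticK_pos (Ioo.one_sub_mem hy1).2) (ellipticK_pos hy1.2)] at hratio
  exact mul_nonneg (by positivity) (sub_nonneg.2 hratio)

lemma log_four_le_ellipticK_mul_ellipticK_one_sub_add_log_of_le_half {x : ℝ}
    (hx : x ∈ Ioc 0 (1 / 2)) :
    log 4 ≤ 2 / π * (ellipticK x * ellipticK (1 - x)) + 1 / 2 * (log x + log (1 - x)) := by
  have hlim : Tendsto (fun y ↦ ellipticK (1 - y) + 1 / 2 * log y + 1 / 2 * log (1 - y))
      (𝓝[>] 0) (𝓝 (log 4)) := by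
    have hcont : ContinuousAt (fun y : ℝ ↦ 1 / 2 * log (1 - y)) 0 := by fun_prop (disch := simp)
    simpa using tendsto_ellipticK_one_sub_add_log_nhdsGT_zero.add
      (hcont.tendsto.mono_left (nhdsWithin_le_nhds (s := Ioi 0)))
  refine le_of_tendsto hlim ?_
  filter_upwards [Ioo_mem_nhdsGT hx.1] with y hy
  have hy2 := hy.2.le.trans hx.2
  have hy1 : y < 1 := hy2.trans_lt one_half_lt_one
  have hmono := monotoneOn_ellipticK_mul_ellipticK_one_sub_add_log ⟨hy.1, hy2⟩ hx hy.2.le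
  have hK : 1 ≤ 2 / π * ellipticK y := by
    have := pi_div_two_le_ellipticK hy.1.le hy1
    rw [div_mul_eq_mul_div, one_le_div pi_pos]
    linarith
  have := le_mul_of_one_le_left (ellipticK_pos (sub_lt_self 1 hy.1)).le hK
  simp only at hmono
  linarith

lemma log_four_le_ellipticK_mul_ellipticK_one_sub_add_log {x : ℝ} (hx : x ∈ Ioo 0 1) :
    log 4 ≤ 2 / π * (ellipticK x * ellipticK (1 - x)) + 1 / 2 * (log x + log (1 - x)) := by
  rcases le_total x (1 / 2) with hx2 | hx2
  · exact log_four_le_ellipticK_mul_ellipticK_one_sub_add_log_of_le_half ⟨hx.1, hx2⟩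
  · have h := log_four_le_ellipticK_mul_ellipticK_one_sub_add_log_of_le_half
      ⟨sub_pos.2 hx.2, show 1 - x ≤ 1 / 2 by linarith⟩
    rwa [sub_sub_cancel, mul_comm (ellipticK (1 - x)), add_comm (log (1 - x))] at h

/-! ### The Grötzsch modulus -/

/-- The Grötzsch modulus as a function of the parameter `x = r²`. -/
noncomputable def modulus (x : ℝ) : ℝ :=
  π / 2 * ellipticK (1 - x) / ellipticK x

lemma modulus_pos {x : ℝ} (hx : x ∈ Ioo 0 1) : 0 < modulus x :=
  div_pos (mul_pos pi_div_two_pos (ellipticK_pos (Ioo.one_sub_mem hx).2)) (ellipticK_pos hx.2)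

lemma modulus_mul_modulus_one_sub {x : ℝ} (hx : x ∈ Ioo 0 1) :
    modulus x * modulus (1 - x) = (π / 2) ^ 2 := by
  have hK := ellipticK_pos hx.2
  have hK' := ellipticK_pos (Ioo.one_sub_mem hx).2
  rw [modulus, modulus, sub_sub_cancel]
  field_simp

lemma hasDerivAt_modulus {x : ℝ} (hx : x ∈ Ioo 0 1) :
    HasDerivAt modulus (-(π ^ 2 / (8 * x * (1 - x) * ellipticK x ^ 2))) x := by
  have hx0 := hx.1
  have h1x := sub_pos.2 hx.2
  have hK := ellipticK_pos hx.2
  refine HasDerivAt.congr_deriv (f := modulus) (((hasDerivAt_ellipticK_one_sub hx.1).const_mul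
    (π / 2)).div (hasDerivAt_ellipticK hx.2) hK.ne') ?_
  field_simp
  linear_combination (-8) * legendre_relation hx

lemma strictAntiOn_modulus : StrictAntiOn modulus (Ioo 0 1) := by
  refine strictAntiOn_of_hasDerivAt_neg (convex_Ioo 0 1) (fun x hx ↦ hasDerivAt_modulus hx) ?_
  rw [interior_Ioo]
  intro x hx
  have hx0 := hx.1
  have h1x := sub_pos.2 hx.2
  have hK := ellipticK_pos hx.2
  exact neg_neg_of_pos (by positivity)

lemma tendsto_modulus_nhdsGT_zero : Tendsto modulus (𝓝[>] 0) atTop := by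
  have hK' : Tendsto (fun x ↦ ellipticK (1 - x)) (𝓝[>] 0) atTop := by
    have hlog : Tendsto (fun x ↦ -(1 / 2) * log x) (𝓝[>] 0) atTop :=
      tendsto_log_nhdsGT_zero.const_mul_atBot_of_neg (by norm_num)
    refine (tendsto_ellipticK_one_sub_add_log_nhdsGT_zero.add_atTop hlog).congr fun x ↦ ?_
    ring
  have hK : Tendsto (fun x ↦ π / 2 / ellipticK x) (𝓝[>] 0) (𝓝 1) := by
    have h := (tendsto_const_nhds (x := π / 2)).div tendsto_ellipticK_nhdsGT_zero pi_div_two_pos.ne'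
    rwa [div_self pi_div_two_pos.ne'] at h
  refine (hK'.atTop_mul_pos one_pos hK).congr fun x ↦ ?_
  rw [modulus]
  ring

lemma tendsto_modulus_one_sub_nhdsGT_zero :
    Tendsto (fun x ↦ modulus (1 - x)) (𝓝[>] 0) (𝓝 0) := by
  refine (tendsto_modulus_nhdsGT_zero.const_div_atTop ((π / 2) ^ 2)).congr' ?_
  filter_upwards [Ioo_mem_nhdsGT one_pos] with x hx
  rw [div_eq_iff (modulus_pos hx).ne', mul_comm, modulus_mul_modulus_one_sub hx]

lemma bijOn_modulus : BijOn modulus (Ioo 0 1) (Ioi 0) := by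
  refine ⟨fun x hx ↦ modulus_pos hx, strictAntiOn_modulus.injOn, ?_⟩
  have hmem : Ioo (0 : ℝ) 1 ∈ 𝓝[>] (0 : ℝ) := Ioo_mem_nhdsGT one_pos
  have hmem' : Ioo (0 : ℝ) 1 ∈ map (fun x ↦ 1 - x) (𝓝[>] (0 : ℝ)) :=
    mem_map.2 (mem_of_superset hmem fun x hx ↦ Ioo.one_sub_mem hx)
  exact isPreconnected_Ioo.intermediate_value_Ioi (le_principal_iff.2 hmem')
    (le_principal_iff.2 hmem) (fun x hx ↦ (hasDerivAt_modulus hx).continuousAt.continuousWithinAt)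
    (tendsto_map'_iff.2 tendsto_modulus_one_sub_nhdsGT_zero) tendsto_modulus_nhdsGT_zero

lemma antitoneOn_modulus_add_log : AntitoneOn (fun x ↦ modulus x + 1 / 2 * log x) (Ioo 0 1) := by
  refine antitoneOn_of_hasDerivAt_nonpos (convex_Ioo 0 1) (fun x hx ↦ (hasDerivAt_modulus hx).add
    ((hasDerivAt_log hx.1.ne').const_mul (1 / 2))) ?_
  rw [interior_Ioo]
  intro x hx
  have hx0 := hx.1
  have h1x := sub_pos.2 hx.2
  have hK := ellipticK_pos hx.2
  have hsq := one_sub_mul_ellipticK_sq_le (Ioo_subset_Ico_self hx)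
  rw [neg_add_nonpos_iff, ← one_div, div_mul_div_comm, div_le_div_iff₀ (by positivity)
    (by positivity)]
  nlinarith

lemma modulus_le_ellipticK_one_sub {x : ℝ} (hx : x ∈ Ioo 0 1) : modulus x ≤ ellipticK (1 - x) := by
  rw [modulus, div_le_iff₀ (ellipticK_pos hx.2), mul_comm]
  exact mul_le_mul_of_nonneg_left (pi_div_two_le_ellipticK hx.1.le hx.2)
    (ellipticK_pos (Ioo.one_sub_mem hx).2).le

lemma modulus_le_log {x : ℝ} (hx : x ∈ Ioo 0 1) : modulus x ≤ log 4 - 1 / 2 * log x := by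
  have h := le_of_antitoneOn_Ioo_of_tendsto antitoneOn_modulus_add_log
    (g := fun x ↦ ellipticK (1 - x) + 1 / 2 * log x)
    (fun _ hy ↦ add_le_add_left (modulus_le_ellipticK_one_sub hy) _)
    tendsto_ellipticK_one_sub_add_log_nhdsGT_zero hx
  exact le_sub_iff_add_le.2 h

lemma strictMonoOn_div_modulus_sq_sub_ellipticK_sq {c : ℝ} (hc : (π / 2) ^ 4 ≤ c) :
    StrictMonoOn (fun x ↦ c / modulus x ^ 2 - ellipticK x ^ 2) (Ioo 0 1) := by
  refine strictMonoOn_of_hasDerivAt_pos (f' := fun x ↦ ellipticK x *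
    (2 * c / π - x * ellipticB x * ellipticK (1 - x) ^ 3) /
      (x * (1 - x) * ellipticK (1 - x) ^ 3)) (convex_Ioo 0 1) (fun x hx ↦ ?_) ?_
  · have hx0 := hx.1
    have h1x := sub_pos.2 hx.2
    have hK := ellipticK_pos hx.2
    have hK' := ellipticK_pos (Ioo.one_sub_mem hx).2
    refine (((hasDerivAt_const x c).div ((hasDerivAt_modulus hx).pow 2)
      (pow_pos (modulus_pos hx) 2).ne').sub ((hasDerivAt_ellipticK hx.2).pow 2)).congr_deriv ?_
    simp only [Pi.pow_apply, modulus, Nat.add_one_sub_one, pow_one]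
    field_simp
    ring
  · rw [interior_Ioo]
    intro x hx
    have hx0 := hx.1
    have h1x := sub_pos.2 hx.2
    have hK := ellipticK_pos hx.2
    have hK' := ellipticK_pos (Ioo.one_sub_mem hx).2
    have hcπ : (π / 2) ^ 3 ≤ 2 * c / π := by
      rw [le_div_iff₀ pi_pos]
      linarith
    have := (mul_ellipticB_mul_ellipticK_one_sub_pow_three_lt hx).trans_le hcπ
    exact div_pos (mul_pos hK (sub_pos.2 this)) (by positivity)

/-- The inverse of `modulus : (0, 1) → (0, ∞)`, with junk values outside `(0, ∞)`. -/
noncomputable def modulusInv : ℝ → ℝ :=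
  Function.invFunOn modulus (Ioo 0 1)

lemma modulusInv_mem_Ioo {c : ℝ} (hc : 0 < c) : modulusInv c ∈ Ioo 0 1 :=
  Function.invFunOn_mem (bijOn_modulus.surjOn hc)

lemma modulus_modulusInv {c : ℝ} (hc : 0 < c) : modulus (modulusInv c) = c :=
  Function.invFunOn_eq (bijOn_modulus.surjOn hc)

lemma modulusInv_modulus {x : ℝ} (hx : x ∈ Ioo 0 1) : modulusInv (modulus x) = x :=
  bijOn_modulus.injOn.leftInvOn_invFunOn hx

lemma strictAntiOn_modulusInv : StrictAntiOn modulusInv (Ioi 0) := fun a ha b hb hab ↦ by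
  rwa [← strictAntiOn_modulus.lt_iff_gt (modulusInv_mem_Ioo ha) (modulusInv_mem_Ioo hb),
    modulus_modulusInv ha, modulus_modulusInv hb]

lemma image_modulusInv : modulusInv '' Ioi 0 = Ioo 0 1 :=
  Subset.antisymm (image_subset_iff.2 fun _ hc ↦ modulusInv_mem_Ioo hc)
    fun x hx ↦ ⟨modulus x, modulus_pos hx, modulusInv_modulus hx⟩

lemma continuousAt_modulusInv {c : ℝ} (hc : 0 < c) : ContinuousAt modulusInv c := by
  refine (strictAntiOn_modulusInv.dual_right).continuousAt_of_image_mem_nhds (Ioi_mem_nhds hc) ?_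
  rw [image_comp, image_modulusInv, OrderDual.toDual.image_eq_preimage_symm]
  exact continuous_ofDual.continuousAt
    (Ioo_mem_nhds (modulusInv_mem_Ioo hc).1 (modulusInv_mem_Ioo hc).2)

lemma hasDerivAt_modulusInv {c : ℝ} (hc : 0 < c) : HasDerivAt modulusInv
    (-(8 * modulusInv c * (1 - modulusInv c) * ellipticK (modulusInv c) ^ 2 / π ^ 2)) c := by
  have hy := modulusInv_mem_Ioo hc
  have hy0 := hy.1
  have h1y := sub_pos.2 hy.2
  have hK := ellipticK_pos hy.2
  refine (HasDerivAt.of_local_left_inverse (continuousAt_modulusInv hc) (hasDerivAt_modulus hy)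
    (neg_ne_zero.2 (by positivity))
    (eventually_of_mem (Ioi_mem_nhds hc) fun _ ↦ modulus_modulusInv)).congr_deriv ?_
  rw [inv_neg, inv_div]

lemma hasDerivAt_log_one_sub_sub_log_modulusInv {c : ℝ} (hc : 0 < c) :
    HasDerivAt (fun c ↦ log (1 - modulusInv c) - log (modulusInv c))
      (8 * ellipticK (modulusInv c) ^ 2 / π ^ 2) c := by
  have hy := modulusInv_mem_Ioo hc
  have hy0 := hy.1
  have h1y := sub_pos.2 hy.2
  refine ((((hasDerivAt_modulusInv hc).const_sub 1).log h1y.ne').sub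
    ((hasDerivAt_modulusInv hc).log hy.1.ne')).congr_deriv ?_
  field_simp
  ring

/-! ### The distortion function -/

/-- The logarithm of `16 ^ (1 / K) * η_K(t) / (t ^ (1 / K) * (1 + t) ^ (K - 1 / K))`, expressed
through the parameter `x = 1 / (1 + t)`. -/
noncomputable def logDistortion (x K : ℝ) : ℝ :=
  (log 16 - log (1 - x)) / K + K * log x +
    (log (1 - modulusInv (K * modulus x)) - log (modulusInv (K * modulus x)))

/-- The derivative of `logDistortion x`. The variable `K` is eliminated in favour of
`y = modulusInv (K * modulus x)`, since the bracket is a monotone function of `y`. -/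
noncomputable def logDistortionDeriv (x K : ℝ) : ℝ :=
  log x - 8 * modulus x / π ^ 2 * (π ^ 2 / 8 * ((log 16 - log (1 - x)) * modulus x) /
    modulus (modulusInv (K * modulus x)) ^ 2 - ellipticK (modulusInv (K * modulus x)) ^ 2)

lemma hasDerivAt_logDistortion {x K : ℝ} (hx : x ∈ Ioo 0 1) (hK : 0 < K) :
    HasDerivAt (logDistortion x) (logDistortionDeriv x K) K := by
  have hm := modulus_pos hx
  have hc : 0 < K * modulus x := mul_pos hK hm
  have hodds := (hasDerivAt_log_one_sub_sub_log_modulusInv hc).comp K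
    ((hasDerivAt_id' K).mul_const (modulus x))
  refine HasDerivAt.congr_deriv (f := logDistortion x) ((((hasDerivAt_const K _).div
    (hasDerivAt_id' K) hK.ne').add ((hasDerivAt_id' K).mul_const (log x))).add hodds) ?_
  rw [logDistortionDeriv, modulus_modulusInv hc]
  field_simp
  ring

lemma pi_div_two_pow_four_le_log_sub_mul_modulus {x : ℝ} (hx : x ∈ Ioo 0 1) :
    (π / 2) ^ 4 ≤ π ^ 2 / 8 * ((log 16 - log (1 - x)) * modulus x) := by
  have hlog : 2 * modulus (1 - x) ≤ log 16 - log (1 - x) := by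
    linarith [modulus_le_log (Ioo.one_sub_mem hx), log_sixteen]
  calc (π / 2) ^ 4 = π ^ 2 / 8 * (2 * modulus (1 - x) * modulus x) := by
        linear_combination (-π ^ 2 / 4) * modulus_mul_modulus_one_sub hx
    _ ≤ π ^ 2 / 8 * ((log 16 - log (1 - x)) * modulus x) := by
        have := (modulus_pos hx).le
        gcongr

lemma strictMonoOn_logDistortionDeriv {x : ℝ} (hx : x ∈ Ioo 0 1) :
    StrictMonoOn (logDistortionDeriv x) (Ioi 0) := by
  intro K hK L hL hKL
  have hm := modulus_pos hx
  have hlt := strictMonoOn_div_modulus_sq_sub_ellipticK_sq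
    (pi_div_two_pow_four_le_log_sub_mul_modulus hx)
    (modulusInv_mem_Ioo (mul_pos hL hm)) (modulusInv_mem_Ioo (mul_pos hK hm))
    (strictAntiOn_modulusInv (mul_pos hK hm) (mul_pos hL hm) (mul_lt_mul_of_pos_right hKL hm))
  exact sub_lt_sub_left (mul_lt_mul_of_pos_left hlt (by positivity)) _

lemma logDistortionDeriv_one_nonneg {x : ℝ} (hx : x ∈ Ioo 0 1) : 0 ≤ logDistortionDeriv x 1 := by
  have hm := modulus_pos hx
  have hKne := (ellipticK_pos hx.2).ne'
  have hKK : 8 * modulus x / π ^ 2 * ellipticK x ^ 2 =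
      2 * (2 / π * (ellipticK x * ellipticK (1 - x))) := by
    rw [modulus]
    field_simp
    ring
  have hvalue : logDistortionDeriv x 1 =
      log x - (log 16 - log (1 - x)) + 8 * modulus x / π ^ 2 * ellipticK x ^ 2 := by
    rw [logDistortionDeriv, one_mul, modulusInv_modulus hx]
    field_simp
    ring
  linarith [log_four_le_ellipticK_mul_ellipticK_one_sub_add_log hx, log_sixteen]

lemma strictMonoOn_logDistortion {x : ℝ} (hx : x ∈ Ioo 0 1) :
    StrictMonoOn (logDistortion x) (Ici 1) := by
  refine strictMonoOn_of_hasDerivAt_pos (convex_Ici 1)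
    (fun K hK ↦ hasDerivAt_logDistortion hx (one_pos.trans_le hK)) ?_
  rw [interior_Ici]
  exact fun K hK ↦ (logDistortionDeriv_one_nonneg hx).trans_lt
    (strictMonoOn_logDistortionDeriv hx (mem_Ioi.2 one_pos) (mem_Ioi.2 (one_pos.trans hK)) hK)

lemma convexOn_logDistortion {x : ℝ} (hx : x ∈ Ioo 0 1) :
    ConvexOn ℝ (Ioi 0) (logDistortion x) := by
  have hderiv : EqOn (logDistortionDeriv x) (deriv (logDistortion x)) (Ioi 0) := fun K hK ↦
    (hasDerivAt_logDistortion hx hK).deriv.symm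
  have hdiff : DifferentiableOn ℝ (logDistortion x) (Ioi 0) := fun K hK ↦
    (hasDerivAt_logDistortion hx hK).differentiableAt.differentiableWithinAt
  refine MonotoneOn.convexOn_of_deriv (convex_Ioi 0) hdiff.continuousOn ?_ ?_
  · rwa [interior_Ioi]
  · rw [interior_Ioi]
    exact (strictMonoOn_logDistortionDeriv hx).monotoneOn.congr hderiv

lemma continuousOn_logDistortion {x : ℝ} (hx : x ∈ Ioo 0 1) :
    ContinuousOn (logDistortion x) (Ioi 0) :=
  fun _ hK ↦ (hasDerivAt_logDistortion hx hK).continuousAt.continuousWithinAt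

lemma logDistortion_one {x : ℝ} (hx : x ∈ Ioo 0 1) : logDistortion x 1 = log 16 := by
  rw [logDistortion, one_mul, one_mul, modulusInv_modulus hx]
  ring

lemma exp_logDistortion {t K : ℝ} (ht : 0 < t) (hK : 0 < K) :
    exp (logDistortion (1 / (1 + t)) K) =
      16 ^ (1 / K) * (1 / modulusInv (K * modulus (1 / (1 + t))) - 1) /
        (t ^ (1 / K) * (1 + t) ^ (K - 1 / K)) := by
  have hy := modulusInv_mem_Ioo (mul_pos hK (modulus_pos (one_div_one_add_mem_Ioo ht)))
  have h1t : 0 < 1 + t := by positivity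
  have hx : 1 - 1 / (1 + t) = t / (1 + t) := by field_simp; ring
  have hodds : ∀ y ∈ Ioo (0 : ℝ) 1, 1 / y - 1 = exp (log (1 - y) - log y) := fun y hy ↦ by
    rw [exp_sub, exp_log (sub_pos.2 hy.2), exp_log hy.1, sub_div, div_self hy.1.ne']
  rw [hodds _ hy, rpow_def_of_pos (by norm_num), rpow_def_of_pos ht, rpow_def_of_pos h1t,
    ← exp_add, ← exp_add, ← exp_sub, logDistortion, hx, log_div ht.ne' h1t.ne', one_div (1 + t),
    log_inv]
  congr 1
  ring

lemma mu_sqrt {x : ℝ} (hx : x ∈ Ioo 0 1) : mu √x = modulus x := by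
  simp only [mu, ellK, modulus, ellipticK, sq_sqrt hx.1.le, sq_sqrt (Ioo.one_sub_mem hx).1.le]

lemma mu_sqrt_modulusInv {t K : ℝ} (ht : 0 < t) (hK : 0 < K) :
    mu √(modulusInv (K * modulus (1 / (1 + t)))) = K * mu (1 / √(1 + t)) := by
  have hx := one_div_one_add_mem_Ioo ht
  have hc := mul_pos hK (modulus_pos hx)
  have hsqrt : √(1 / (1 + t)) = 1 / √(1 + t) := by rw [sqrt_div zero_le_one, sqrt_one]
  rw [mu_sqrt (modulusInv_mem_Ioo hc), modulus_modulusInv hc, ← hsqrt, mu_sqrt hx]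

end Development

theorem stmt_17 (eta : ℝ → ℝ → ℝ)
    (heta : ∀ K t : ℝ, 0 < K → 0 < t → ∀ u ∈ Set.Ioo (0:ℝ) 1,
      mu u = K * mu (1 / Real.sqrt (1 + t)) → eta K t = 1 / u ^ 2 - 1) (t : ℝ) (ht : 0 < t) (f : ℝ → ℝ)
    (hf : f = fun K : ℝ =>
      (16:ℝ) ^ (1 / K) * eta K t / (t ^ (1 / K) * (1 + t) ^ (K - 1 / K))) :
    StrictMonoOn f (Set.Ici 1) ∧ ConvexOn ℝ (Set.Ici 1) f ∧
    f 1 = 16 ∧ Filter.Tendsto f Filter.atTop Filter.atTop ∧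
    f '' Set.Ici 1 = Set.Ici 16 ∧
    ∀ K : ℝ, 1 < K →
      (16:ℝ) ^ (1 - 1 / K) * t ^ (1 / K) * (1 + t) ^ (K - 1 / K) < eta K t := by
  have hx : 1 / (1 + t) ∈ Ioo 0 1 := one_div_one_add_mem_Ioo ht
  have hIci : Ici (1 : ℝ) ⊆ Ioi 0 := Ici_subset_Ioi.2 one_pos
  have hfexp : EqOn (fun K ↦ Real.exp (logDistortion (1 / (1 + t)) K)) f (Ici 1) := fun K hK ↦ by
    have hy := modulusInv_mem_Ioo (mul_pos (hIci hK) (modulus_pos hx))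
    simp only [hf]
    rw [exp_logDistortion ht (hIci hK), heta K t (hIci hK) ht _ (sqrt_mem_Ioo hy)
      (mu_sqrt_modulusInv ht (hIci hK)), Real.sq_sqrt hy.1.le]
  have hmono : StrictMonoOn f (Ici 1) :=
    (Real.exp_strictMono.comp_strictMonoOn (strictMonoOn_logDistortion hx)).congr hfexp
  have hconv : ConvexOn ℝ (Ici 1) f :=
    (convexOn_exp_comp ((convexOn_logDistortion hx).subset hIci (convex_Ici 1))).congr hfexp
  have hcont : ContinuousOn f (Ici 1) :=
    ((continuousOn_logDistortion hx).mono hIci).rexp.congr hfexp.symm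
  have hf1 : f 1 = 16 := by
    rw [← hfexp self_mem_Ici]
    simp only [logDistortion_one hx, Real.exp_log (show (0 : ℝ) < 16 by norm_num)]
  have htop : Tendsto f atTop atTop := tendsto_atTop_of_convexOn_Ici hconv one_lt_two
    (hmono self_mem_Ici (mem_Ici.2 one_le_two) one_lt_two)
  refine ⟨hmono, hconv, hf1, htop, ?_, fun K hK ↦ ?_⟩
  · rw [hcont.image_Ici_of_monotoneOn hmono.monotoneOn htop, hf1]
  · have h16 : 16 < f K := hf1 ▸ hmono self_mem_Ici hK.le hK
    rw [hf] at h16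
    rw [mul_assoc]
    exact rpow_one_sub_mul_lt_of_lt_rpow_mul_div (by norm_num) (by positivity) h16
end
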